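/- arXiv:2202.03348 — 2 statements merged into one kernel-verified Lean document; each statement's English description precedes it below -/
import Mathlib

section
/- Let χ ≥ 0, 0 ≤ ξ < (χ+1)/2 and σ > 0. Suppose ((λ_ρ, φ_ρ))_{ρ ≥ 1} is a sequence of eigenpairs of the Laplace kernel with respect to p such that each φ_ρ is odd and normalized with ∫_ℝ p φ_ρ² = 1, each λ_ρ > 0, and there exist constants 0 < a ≤ b with a ρ^{−2} ≤ λ_ρ ≤ b ρ^{−2} for all large ρ. Then the coefficients c_ρ = ∫_ℝ p(x) f*_ξ(x) φ_ρ(x) dx satisfy: there exist constants 0 < c ≤ C and ρ₀ such that for all ρ ≥ ρ₀, c · ρ^{−(3χ + 4 − 4ξ)/(χ+2)} ≤ c_ρ² ≤ C · ρ^{−(3χ + 4 − 4ξ)/(χ+2)}. -/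
open MeasureTheory Real Filter

/-- The data density `p(x) = |x|^χ e^{-x²} / Γ((1+χ)/2)`. -/
noncomputable def dataDensity (χ : ℝ) (x : ℝ) : ℝ :=
  |x| ^ χ * Real.exp (-x ^ 2) / Real.Gamma ((1 + χ) / 2)

/-- The target function `f*_ξ(x) = sign(x) |x|^{-ξ}`. -/
noncomputable def targetFun (ξ : ℝ) (x : ℝ) : ℝ :=
  Real.sign x * |x| ^ (-ξ)

section Helpers

open Set Topology

theorem gron_upper {E E' K k : ℝ → ℝ} {a b : ℝ} (hab : a ≤ b)
    (hE : ∀ x ∈ Icc a b, HasDerivAt E (E' x) x)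
    (hK : ∀ x ∈ Icc a b, HasDerivAt K (k x) x)
    (h : ∀ x ∈ Icc a b, E' x ≤ k x * E x) :
    E b ≤ E a * Real.exp (K b - K a) := by
  have hd : ∀ x ∈ Icc a b, HasDerivAt (fun x => E x * Real.exp (-K x))
      (E' x * Real.exp (-K x) + E x * (Real.exp (-K x) * (-k x))) x := fun x hx =>
    (hE x hx).mul ((hK x hx).neg.exp)
  have hanti : AntitoneOn (fun x => E x * Real.exp (-K x)) (Icc a b) := by
    apply antitoneOn_of_hasDerivWithinAt_nonpos (convex_Icc a b)
      (f' := fun x => (E' x * Real.exp (-K x) + E x * (Real.exp (-K x) * (-k x))))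
    · exact fun x hx => (hd x hx).continuousAt.continuousWithinAt
    · intro x hx
      exact (hd x (interior_subset hx)).hasDerivWithinAt
    · intro x hx
      have h1 := h x (interior_subset hx)
      have h2 := Real.exp_pos (-K x)
      nlinarith
  have h3 := hanti (left_mem_Icc.2 hab) (right_mem_Icc.2 hab) hab
  simp only at h3
  have h4 : E b = (E b * Real.exp (-K b)) * Real.exp (K b) := by
    rw [mul_assoc, ← Real.exp_add]; simp
  rw [h4]
  calc (E b * Real.exp (-K b)) * Real.exp (K b)
      ≤ (E a * Real.exp (-K a)) * Real.exp (K b) := by gcongr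
    _ = _ := by rw [mul_assoc, ← Real.exp_add]; ring_nf

theorem gron_lower {E E' K k : ℝ → ℝ} {a b : ℝ} (hab : a ≤ b)
    (hE : ∀ x ∈ Icc a b, HasDerivAt E (E' x) x)
    (hK : ∀ x ∈ Icc a b, HasDerivAt K (k x) x)
    (h : ∀ x ∈ Icc a b, -(k x * E x) ≤ E' x) :
    E a * Real.exp (-(K b - K a)) ≤ E b := by
  have := gron_upper (E := fun x => - E x) (E' := fun x => - E' x) (K := fun x => - K x)
    (k := fun x => - k x) hab (fun x hx => (hE x hx).neg) (fun x hx => (hK x hx).neg)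
    (fun x hx => by have := h x hx; linarith)
  have e : -K b - -K a = -(K b - K a) := by ring
  rw [e] at this
  linarith

/-- Rescaled eigenfunction equation on the half line. -/
structure Sol (χ κ δ : ℝ) (φ d : ℝ → ℝ) : Prop where
  hφ : ∀ x, HasDerivAt φ (d x) x
  hd : ∀ x, HasDerivAt d ((κ - δ ^ (-(χ + 2)) * (|x| ^ χ * Real.exp (-x ^ 2))) * φ x) x
  h0 : φ 0 = 0
  tφ : Tendsto φ atTop (𝓝 0)
  td : Tendsto d atTop (𝓝 0)

/-- the scale parameter as a function of the cutoff -/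
noncomputable def dl (χ y : ℝ) : ℝ := Real.exp (-(y ^ 2 / (χ + 3 / 2)))

theorem dl_pos (χ y : ℝ) : 0 < dl χ y := Real.exp_pos _

theorem small {χ : ℝ} (hχ : 0 ≤ χ) (e B : ℝ) (he : 0 < e) :
    Tendsto (fun y => dl χ y ^ e * Real.exp (B * y)) atTop (𝓝 0) := by
  have h : ∀ y, dl χ y ^ e * Real.exp (B * y)
      = Real.exp (-(y * ((e / (χ + 3/2)) * y - B))) := by
    intro y
    rw [dl, ← Real.exp_mul, ← Real.exp_add]
    congr 1
    field_simp
    ring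
  simp_rw [h]
  apply Real.tendsto_exp_neg_atTop_nhds_zero.comp
  apply Tendsto.atTop_mul_atTop₀ tendsto_id
  apply tendsto_atTop_add_const_right
  exact Tendsto.const_mul_atTop (by positivity) tendsto_id

theorem small_ev {χ : ℝ} (hχ : 0 ≤ χ) (e B ε : ℝ) (he : 0 < e) (hε : 0 < ε) :
    ∀ᶠ y in atTop, dl χ y ^ e * Real.exp (B * y) ≤ ε :=
  ((small hχ e B he).eventually (gt_mem_nhds hε)).mono fun _ h => h.le

theorem small_ev1 {χ : ℝ} (hχ : 0 ≤ χ) (ε : ℝ) (hε : 0 < ε) :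
    ∀ᶠ y in atTop, dl χ y ≤ ε := by
  filter_upwards [small_ev hχ 1 0 ε one_pos hε] with y hy
  simpa using hy

/-- Region I. -/
theorem regionI {χ κ : ℝ} (hχ : 0 ≤ χ) (hκ : 0 < κ) :
    ∃ L : ℝ, 0 ≤ L ∧ ∀ δ, 0 < δ → δ ≤ 1 → ∀ φ d, Sol χ κ δ φ d →
      ∀ x, 0 ≤ x → x ≤ (χ + 2) * δ →
      Real.exp (-L) * d 0 ^ 2 ≤ d x ^ 2 + φ x ^ 2 / δ ^ 2 ∧
      d x ^ 2 + φ x ^ 2 / δ ^ 2 ≤ Real.exp L * d 0 ^ 2 := by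
  set A := κ + 1 + (χ + 2) ^ χ with hA
  have hA0 : 0 ≤ A := by positivity
  refine ⟨A * (χ + 2), by positivity, fun δ hδ hδ1 φ d S x hx0 hx => ?_⟩
  have hE : ∀ z ∈ Icc 0 x, HasDerivAt (fun z => d z ^ 2 + φ z ^ 2 / δ ^ 2)
      (2 * φ z * d z * ((κ - δ ^ (-(χ + 2)) * (|z| ^ χ * Real.exp (-z ^ 2))) + 1 / δ ^ 2)) z := by
    intro z _
    have := ((S.hd z).pow 2).add (((S.hφ z).pow 2).div_const (δ ^ 2))
    refine this.congr_deriv ?_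
    push_cast
    ring
  have hK : ∀ z ∈ Icc 0 x, HasDerivAt (fun z => (A / δ) * z) (A / δ) z := by
    intro z _
    simpa using (hasDerivAt_id z).const_mul (A / δ)
  have hP : ∀ z ∈ Icc 0 x, 0 ≤ δ ^ (-(χ + 2)) * (|z| ^ χ * Real.exp (-z ^ 2)) ∧
      δ ^ (-(χ + 2)) * (|z| ^ χ * Real.exp (-z ^ 2)) ≤ (χ + 2) ^ χ / δ ^ 2 := by
    intro z hz
    refine ⟨by positivity, ?_⟩
    have h1 : |z| ^ χ ≤ ((χ + 2) * δ) ^ χ := by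
      rw [abs_of_nonneg hz.1]
      exact Real.rpow_le_rpow hz.1 (hz.2.trans hx) hχ
    have h2 : Real.exp (-z ^ 2) ≤ 1 := Real.exp_le_one_iff.2 (by nlinarith [sq_nonneg z])
    calc δ ^ (-(χ + 2)) * (|z| ^ χ * Real.exp (-z ^ 2))
        ≤ δ ^ (-(χ + 2)) * (((χ + 2) * δ) ^ χ * 1) := by gcongr
      _ = (χ + 2) ^ χ * (δ ^ (-(χ + 2)) * δ ^ χ) := by
          rw [Real.mul_rpow (by positivity) hδ.le]; ring
      _ = (χ + 2) ^ χ / δ ^ 2 := by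
          rw [← Real.rpow_add hδ]
          have : -(χ + 2) + χ = -(2:ℝ) := by ring
          rw [this, Real.rpow_neg hδ.le]
          norm_num [div_eq_mul_inv]
  have hb : ∀ z ∈ Icc 0 x, |2 * φ z * d z * ((κ - δ ^ (-(χ + 2)) * (|z| ^ χ * Real.exp (-z ^ 2))) + 1 / δ ^ 2)|
      ≤ A / δ * (d z ^ 2 + φ z ^ 2 / δ ^ 2) := by
    intro z hz
    obtain ⟨p1, p2⟩ := hP z hz
    set P := δ ^ (-(χ + 2)) * (|z| ^ χ * Real.exp (-z ^ 2))
    have hδ2 : 1 ≤ 1 / δ ^ 2 := by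
      rw [le_div_iff₀ (by positivity)]; nlinarith
    have h1 : |κ - P + 1 / δ ^ 2| ≤ A / δ ^ 2 := by
      have : A / δ ^ 2 = κ * (1 / δ ^ 2) + 1 / δ ^ 2 + (χ + 2) ^ χ / δ ^ 2 := by
        rw [hA]; field_simp
      rw [this, abs_le]
      constructor <;> nlinarith [Real.rpow_nonneg (show 0 ≤ χ + 2 by linarith) χ]
    have h2 : |2 * φ z * d z| ≤ δ * (d z ^ 2 + φ z ^ 2 / δ ^ 2) := by
      have e : δ * (d z ^ 2 + φ z ^ 2 / δ ^ 2) = δ * (d z ^ 2 + (φ z / δ) ^ 2) := by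
        rw [div_pow]
      have e2 : 2 * φ z * d z = δ * (2 * (φ z / δ) * d z) := by field_simp
      rw [e, e2, abs_le]
      constructor
      · nlinarith [mul_nonneg hδ.le (sq_nonneg (φ z / δ + d z))]
      · nlinarith [mul_nonneg hδ.le (sq_nonneg (φ z / δ - d z))]
    rw [abs_mul]
    calc _ ≤ (δ * (d z ^ 2 + φ z ^ 2 / δ ^ 2)) * (A / δ ^ 2) := by gcongr
      _ = _ := by field_simp
  have hexp : A / δ * x - A / δ * 0 ≤ A * (χ + 2) := by
    rw [mul_zero, sub_zero, div_mul_eq_mul_div, div_le_iff₀ hδ]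
    nlinarith
  have hD : d 0 ^ 2 + φ 0 ^ 2 / δ ^ 2 = d 0 ^ 2 := by rw [S.h0]; simp
  constructor
  · have := gron_lower hx0 hE hK (fun z hz => by
      have := neg_le_of_abs_le (hb z hz); linarith)
    simp only [hD] at this
    refine le_trans ?_ this
    rw [mul_comm]
    gcongr
  · have := gron_upper hx0 hE hK (fun z hz => le_of_abs_le (hb z hz))
    simp only [hD] at this
    refine le_trans this ?_
    rw [mul_comm]
    gcongr


/-- the WKB weight -/
noncomputable def gw (χ δ x : ℝ) : ℝ :=
  Real.exp ((χ + 2) / 2 * Real.log δ - χ / 2 * Real.log x + x ^ 2 / 2)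

/-- auxiliary decaying weight `(δ/x)^{(χ+2)/2}` -/
noncomputable def hw (χ δ x : ℝ) : ℝ :=
  Real.exp ((χ + 2) / 2 * (Real.log δ - Real.log x))

theorem gw_pos (χ δ x : ℝ) : 0 < gw χ δ x := Real.exp_pos _
theorem hw_pos (χ δ x : ℝ) : 0 < hw χ δ x := Real.exp_pos _

theorem gw_eq_hw {χ δ x : ℝ} (hx : 0 < x) :
    gw χ δ x = hw χ δ x * x * Real.exp (x ^ 2 / 2) := by
  rw [gw, hw]
  have e : Real.exp ((χ + 2) / 2 * (Real.log δ - Real.log x)) * x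
      = Real.exp ((χ + 2) / 2 * (Real.log δ - Real.log x)) * Real.exp (Real.log x) := by
    rw [Real.exp_log hx]
  rw [e, ← Real.exp_add, ← Real.exp_add]
  congr 1
  ring

theorem gw_deriv {χ δ x : ℝ} (hx : 0 < x) :
    HasDerivAt (gw χ δ) (gw χ δ x * (x - χ / (2 * x))) x := by
  have h1 : HasDerivAt (fun x => (χ + 2) / 2 * Real.log δ - χ / 2 * Real.log x + x ^ 2 / 2)
      (x - χ / (2 * x)) x := by
    have := (((Real.hasDerivAt_log hx.ne').const_mul (χ / 2)).const_sub
      ((χ + 2) / 2 * Real.log δ)).add ((hasDerivAt_pow 2 x).div_const 2)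
    refine this.congr_deriv ?_
    field_simp
    ring
  exact h1.exp

theorem hw_deriv {χ δ x : ℝ} (hx : 0 < x) :
    HasDerivAt (hw χ δ) (-((χ + 2) / 2) * (hw χ δ x / x)) x := by
  have h1 : HasDerivAt (fun x => (χ + 2) / 2 * (Real.log δ - Real.log x))
      ((χ + 2) / 2 * (-x⁻¹)) x := by
    exact ((Real.hasDerivAt_log hx.ne').const_sub (Real.log δ)).const_mul ((χ + 2) / 2)
  refine h1.exp.congr_deriv ?_
  rw [hw]
  field_simp

theorem gw_sq {χ δ x : ℝ} (hδ : 0 < δ) (hx : 0 < x) :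
    δ ^ (-(χ + 2)) * (|x| ^ χ * Real.exp (-x ^ 2)) = 1 / gw χ δ x ^ 2 := by
  rw [abs_of_pos hx, Real.rpow_def_of_pos hδ, Real.rpow_def_of_pos hx, gw, ← Real.exp_add,
    ← Real.exp_add, one_div, ← Real.exp_nat_mul, ← Real.exp_neg]
  congr 1
  push_cast
  ring

theorem hw_le {χ δ x : ℝ} (hχ : 0 ≤ χ) (hδ : 0 < δ) (hx : (χ + 2) * δ ≤ x) :
    hw χ δ x ≤ 1 / (χ + 2) := by
  have h2 : 0 < χ + 2 := by linarith
  have hl : Real.log (χ + 2) + Real.log δ ≤ Real.log x := by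
    rw [← Real.log_mul h2.ne' hδ.ne']
    exact Real.log_le_log (by positivity) hx
  have hl0 : 0 ≤ Real.log (χ + 2) := Real.log_nonneg (by linarith)
  have e : 1 / (χ + 2) = Real.exp (-Real.log (χ + 2)) := by
    rw [Real.exp_neg, Real.exp_log h2, one_div]
  rw [hw, e]
  apply Real.exp_le_exp.2
  nlinarith

theorem gw_le_small {χ δ x : ℝ} (hx : 0 < x) (hx1 : x ≤ 1) :
    gw χ δ x ≤ 2 * (hw χ δ x * x) := by
  rw [gw_eq_hw hx]
  have : Real.exp (x ^ 2 / 2) ≤ 2 := by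
    have h1 : x ^ 2 / 2 ≤ 1 / 2 := by nlinarith
    have h2 : Real.exp (1/2) ≤ 2 := by
      have h3 := Real.exp_one_lt_d9
      have h4 : Real.exp (1/2) ^ 2 = Real.exp 1 := by
        rw [← Real.exp_nat_mul]; norm_num
      nlinarith [Real.exp_pos (1/2)]
    exact (Real.exp_le_exp.2 h1).trans h2
  have := mul_pos (hw_pos χ δ x) hx
  nlinarith

theorem log_dl (χ y : ℝ) : Real.log (dl χ y) = -(y ^ 2 / (χ + 3 / 2)) := by
  rw [dl, Real.log_exp]

theorem dl_quarter {χ y : ℝ} (hχ : 0 ≤ χ) :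
    dl χ y ^ (1/4 : ℝ) = Real.exp ((χ + 2) / 2 * Real.log (dl χ y) + y ^ 2 / 2) := by
  rw [Real.rpow_def_of_pos (dl_pos χ y), log_dl]
  congr 1
  field_simp
  ring

theorem gw_le_large {χ x y : ℝ} (hχ : 0 ≤ χ) (hx : 1 ≤ x) (hxy : x ≤ y) :
    gw χ (dl χ y) x ≤ dl χ y ^ (1/4 : ℝ) := by
  rw [dl_quarter hχ, gw]
  apply Real.exp_le_exp.2
  have := Real.log_nonneg hx
  have : 0 ≤ χ / 2 * Real.log x := by positivity
  nlinarith

/-- Smallness conditions. -/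
theorem cond_ev {χ : ℝ} (hχ : 0 ≤ χ) (κ : ℝ) (hκ : 0 < κ) : ∀ᶠ y in atTop,
    2 ≤ y ∧ (χ + 2) * dl χ y ≤ 1 ∧ dl χ y ^ (1/4 : ℝ) * (y + χ / 2) ≤ 1 ∧
    dl χ y ^ (1/4 : ℝ) * (4 * κ + y ^ 2 + χ ^ 2 / 4 + 1 + χ / 2) * y ≤ 1 := by
  have hc : 0 < 4 * κ + 1 + χ ^ 2 / 4 + 1 + χ / 2 := by positivity
  filter_upwards [small_ev hχ (1/4) 3 (1 / (4 * κ + 1 + χ ^ 2 / 4 + 1 + χ / 2)) (by norm_num)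
    (by positivity), small_ev1 hχ (1 / (χ + 2)) (by positivity),
    eventually_ge_atTop 2] with y h1 h2 h3
  have hd : 0 < dl χ y ^ (1/4 : ℝ) := Real.rpow_pos_of_pos (dl_pos χ y) _
  have hy : y ^ 3 ≤ Real.exp (3 * y) := by
    have : y ≤ Real.exp y := by linarith [Real.add_one_le_exp y]
    calc y ^ 3 ≤ Real.exp y ^ 3 := by gcongr
      _ = _ := by rw [← Real.exp_nat_mul]; norm_num
  rw [le_div_iff₀ hc] at h1
  have h4 : dl χ y ^ (1/4 : ℝ) * y ^ 3 * (4 * κ + 1 + χ ^ 2 / 4 + 1 + χ / 2) ≤ 1 := by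
    refine le_trans ?_ h1
    gcongr
  refine ⟨h3, ?_, ?_, ?_⟩
  · rw [le_div_iff₀ (by positivity)] at h2; linarith
  · refine le_trans ?_ h4
    rw [mul_assoc]
    apply mul_le_mul_of_nonneg_left _ hd.le
    have : y ≤ y ^ 3 := by nlinarith [sq_nonneg y]
    nlinarith [sq_nonneg χ, mul_nonneg hχ (sub_nonneg.2 (show 1 ≤ y ^ 3 by nlinarith [sq_nonneg y])),
      mul_nonneg (show 0 ≤ 4 * κ + 1 + χ ^ 2 / 4 by positivity) (show 0 ≤ y ^ 3 by positivity)]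
  · refine le_trans ?_ h4
    rw [mul_assoc, mul_assoc]
    apply mul_le_mul_of_nonneg_left _ hd.le
    have h5 : 1 * y ≤ y ^ 2 * y := by nlinarith
    have h6 : 0 ≤ (4 * κ + χ ^ 2 / 4 + 1 + χ / 2) := by positivity
    nlinarith [mul_nonneg h6 (sub_nonneg.2 h5)]

/-- bounds on the first two derivatives of the weight -/
theorem gw_bounds {χ κ y x : ℝ} (hχ : 0 ≤ χ) (hκ : 0 < κ) (hy : 2 ≤ y)
    (c2 : dl χ y ^ (1/4 : ℝ) * (y + χ / 2) ≤ 1)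
    (hx1 : (χ + 2) * dl χ y ≤ x) (hxy : x ≤ y) :
    |gw χ (dl χ y) x * (x - χ / (2 * x))| ≤ 1 ∧
    4 * κ * gw χ (dl χ y) x + gw χ (dl χ y) x * ((x - χ / (2 * x)) ^ 2 + (1 + χ / (2 * x ^ 2)))
      ≤ 2 * (4 * κ + 2 + χ ^ 2 / 4 + χ / 2) * (hw χ (dl χ y) x / x)
        + dl χ y ^ (1/4 : ℝ) * (4 * κ + y ^ 2 + χ ^ 2 / 4 + 1 + χ / 2) := by
  have hδ := dl_pos χ y
  have hx : 0 < x := lt_of_lt_of_le (by positivity) hx1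
  have hg := gw_pos χ (dl χ y) x
  have hh := hw_pos χ (dl χ y) x
  have hq : 0 < dl χ y ^ (1/4 : ℝ) := Real.rpow_pos_of_pos hδ _
  set g := gw χ (dl χ y) x
  set h := hw χ (dl χ y) x
  set q := dl χ y ^ (1/4 : ℝ)
  have hr : |x - χ / (2 * x)| ≤ x + χ / (2 * x) := by
    rw [abs_le]; constructor <;> linarith [show 0 ≤ χ / (2 * x) by positivity]
  rw [abs_mul, abs_of_pos hg]
  have hrr : (x - χ / (2 * x)) ^ 2 ≤ x ^ 2 + χ ^ 2 / (4 * x ^ 2) := by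
    have : (x - χ / (2 * x)) ^ 2 = x ^ 2 + χ ^ 2 / (4 * x ^ 2) - χ := by field_simp; ring
    linarith
  rcases le_total x 1 with h1 | h1
  · have e1 : g ≤ 2 * (h * x) := gw_le_small hx h1
    have e2 : h ≤ 1 / (χ + 2) := hw_le hχ hδ hx1
    constructor
    · calc g * |x - χ / (2 * x)| ≤ 2 * (h * x) * (x + χ / (2 * x)) := by gcongr
        _ = h * (2 * x ^ 2 + χ) := by field_simp
        _ ≤ 1 / (χ + 2) * (2 * 1 ^ 2 + χ) := by gcongr
        _ = 1 := by field_simp; ring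
    · have e3 : 4 * κ + ((x - χ / (2 * x)) ^ 2 + (1 + χ / (2 * x ^ 2)))
        ≤ (4 * κ + 2 + χ ^ 2 / 4 + χ / 2) / x ^ 2 := by
        have a1 : (1:ℝ) ≤ 1 / x ^ 2 := by rw [le_div_iff₀ (by positivity)]; nlinarith
        have a2 : x ^ 2 ≤ 1 := by nlinarith
        have a3 : (4 * κ + 2 + χ ^ 2 / 4 + χ / 2) / x ^ 2
          = 4 * κ * (1 / x ^ 2) + 2 * (1 / x ^ 2) + χ ^ 2 / (4 * x ^ 2) + χ / (2 * x ^ 2) := by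
          field_simp
        rw [a3]
        nlinarith
      calc 4 * κ * g + g * ((x - χ / (2 * x)) ^ 2 + (1 + χ / (2 * x ^ 2)))
          = g * (4 * κ + ((x - χ / (2 * x)) ^ 2 + (1 + χ / (2 * x ^ 2)))) := by ring
        _ ≤ (2 * (h * x)) * ((4 * κ + 2 + χ ^ 2 / 4 + χ / 2) / x ^ 2) := by gcongr
        _ = 2 * (4 * κ + 2 + χ ^ 2 / 4 + χ / 2) * (h / x) := by field_simp
        _ ≤ _ := by
          have : 0 ≤ q * (4 * κ + y ^ 2 + χ ^ 2 / 4 + 1 + χ / 2) := by positivity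
          linarith
  · have e1 : g ≤ q := gw_le_large hχ h1 hxy
    have a1 : χ / (2 * x) ≤ χ / 2 := by
      apply div_le_div_of_nonneg_left hχ (by norm_num); linarith
    have a2 : χ / (2 * x ^ 2) ≤ χ / 2 := by
      apply div_le_div_of_nonneg_left hχ (by norm_num); nlinarith
    have a3 : χ ^ 2 / (4 * x ^ 2) ≤ χ ^ 2 / 4 := by
      apply div_le_div_of_nonneg_left (by positivity) (by norm_num); nlinarith
    constructor
    · calc g * |x - χ / (2 * x)| ≤ q * (y + χ / 2) := by gcongr; linarith
        _ ≤ 1 := c2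
    · calc 4 * κ * g + g * ((x - χ / (2 * x)) ^ 2 + (1 + χ / (2 * x ^ 2)))
          = g * (4 * κ + ((x - χ / (2 * x)) ^ 2 + (1 + χ / (2 * x ^ 2)))) := by ring
        _ ≤ q * (4 * κ + y ^ 2 + χ ^ 2 / 4 + 1 + χ / 2) := by
          have : x ^ 2 ≤ y ^ 2 := by gcongr
          exact mul_le_mul e1 (by linarith) (by positivity) hq.le
        _ ≤ _ := by
          have : 0 ≤ 2 * (4 * κ + 2 + χ ^ 2 / 4 + χ / 2) * (h / x) := by positivity
          linarith

/-- the amplitude -/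
noncomputable def Nn (χ δ : ℝ) (φ d : ℝ → ℝ) (x : ℝ) : ℝ :=
  gw χ δ x * d x ^ 2 + φ x ^ 2 / gw χ δ x

theorem Nn_nonneg (χ δ : ℝ) (φ d : ℝ → ℝ) (x : ℝ) : 0 ≤ Nn χ δ φ d x := by
  have := gw_pos χ δ x
  unfold Nn; positivity

theorem phid_le (χ δ : ℝ) (φ d : ℝ → ℝ) (x : ℝ) : |φ x * d x| ≤ Nn χ δ φ d x / 2 := by
  have hg := gw_pos χ δ x
  unfold Nn
  set g := gw χ δ x
  have e : g * d x ^ 2 + φ x ^ 2 / g = g * (d x ^ 2 + (φ x / g) ^ 2) := by field_simp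
  have e2 : φ x * d x = g * ((φ x / g) * d x) := by field_simp
  rw [e, e2, abs_le]
  constructor
  · nlinarith [mul_nonneg hg.le (sq_nonneg (φ x / g + d x))]
  · nlinarith [mul_nonneg hg.le (sq_nonneg (φ x / g - d x))]

theorem phisq_le (χ δ : ℝ) (φ d : ℝ → ℝ) (x : ℝ) : φ x ^ 2 ≤ gw χ δ x * Nn χ δ φ d x := by
  have hg := gw_pos χ δ x
  unfold Nn
  have : gw χ δ x * (gw χ δ x * d x ^ 2 + φ x ^ 2 / gw χ δ x)
    = (gw χ δ x * d x) ^ 2 + φ x ^ 2 := by field_simp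
  rw [this]; nlinarith [sq_nonneg (gw χ δ x * d x)]

/-- Region II, energy conservation. -/
theorem regionII_aux {χ κ : ℝ} (hχ : 0 ≤ χ) (hκ : 0 < κ) :
    ∃ L : ℝ, 0 ≤ L ∧ ∀ᶠ y in atTop, ∀ φ d, Sol χ κ (dl χ y) φ d →
      ∀ x, (χ + 2) * dl χ y ≤ x → x ≤ y →
      Real.exp (-L) * Nn χ (dl χ y) φ d ((χ + 2) * dl χ y) ≤ 4 * Nn χ (dl χ y) φ d x ∧
      Nn χ (dl χ y) φ d x ≤ 4 * Real.exp L * Nn χ (dl χ y) φ d ((χ + 2) * dl χ y) := by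
  set A := 2 * (4 * κ + 2 + χ ^ 2 / 4 + χ / 2) with hA
  have hA0 : 0 ≤ A := by positivity
  refine ⟨A + 1, by positivity, ?_⟩
  filter_upwards [cond_ev hχ κ hκ] with y ⟨c0, c1, c2, c3⟩ φ d S x hx1 hxy
  have hδ := dl_pos χ y
  set δ := dl χ y with hδdef
  set x1 := (χ + 2) * δ with hx1def
  have hx1p : 0 < x1 := by positivity
  set B := δ ^ (1/4 : ℝ) * (4 * κ + y ^ 2 + χ ^ 2 / 4 + 1 + χ / 2) with hB
  have hB0 : 0 ≤ B := by positivity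
  set E : ℝ → ℝ := fun z => Nn χ δ φ d z - gw χ δ z * (z - χ / (2 * z)) * (φ z * d z) with hEdef
  set E' : ℝ → ℝ := fun z => (2 * gw χ δ z * κ - gw χ δ z * ((z - χ / (2 * z)) ^ 2 +
      (1 + χ / (2 * z ^ 2)))) * (φ z * d z) - gw χ δ z * (z - χ / (2 * z)) * κ * φ z ^ 2 with hE'def
  have hE : ∀ z ∈ Icc x1 x, HasDerivAt E (E' z) z := by
    intro z hz
    have hz0 : 0 < z := lt_of_lt_of_le hx1p hz.1
    have hg := gw_pos χ δ z
    have g1 := gw_deriv (χ := χ) (δ := δ) hz0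
    have r1 : HasDerivAt (fun z : ℝ => z - χ / (2 * z)) (1 + χ / (2 * z ^ 2)) z := by
      have := (hasDerivAt_id z).sub (((hasDerivAt_inv hz0.ne').const_mul (χ / 2)))
      refine (this.congr_deriv ?_).congr_of_eventuallyEq ?_
      · field_simp; ring
      · filter_upwards [eventually_gt_nhds hz0] with w hw
        simp; field_simp
    have d1 := S.hd z
    rw [gw_sq hδ hz0] at d1
    have := ((g1.mul (d1.pow 2)).add (((S.hφ z).pow 2).div g1 hg.ne')).sub
      ((g1.mul r1).mul ((S.hφ z).mul d1))
    refine this.congr_deriv ?_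
    simp only [hE'def, Pi.mul_apply, Pi.pow_apply]
    push_cast
    field_simp
    ring
  have hEN : ∀ z ∈ Icc x1 x, Nn χ δ φ d z ≤ 2 * E z ∧ E z ≤ 2 * Nn χ δ φ d z := by
    intro z hz
    obtain ⟨b1, -⟩ := gw_bounds hχ hκ c0 c2 hz.1 (hz.2.trans hxy)
    have b2 := phid_le χ δ φ d z
    have b3 : |gw χ δ z * (z - χ / (2 * z)) * (φ z * d z)| ≤ 1 * (Nn χ δ φ d z / 2) := by
      rw [abs_mul]
      exact mul_le_mul b1 b2 (abs_nonneg _) zero_le_one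
    have := abs_le.1 b3
    have := Nn_nonneg χ δ φ d z
    simp only [hEdef]
    constructor <;> linarith
  have hK : ∀ z ∈ Icc x1 x, HasDerivAt (fun z => -(2 * A / (χ + 2)) * hw χ δ z + B * z)
      (A * (hw χ δ z / z) + B) z := by
    intro z hz
    have hz0 : 0 < z := lt_of_lt_of_le hx1p hz.1
    have := ((hw_deriv (χ := χ) (δ := δ) hz0).const_mul (-(2 * A / (χ + 2)))).add
      ((hasDerivAt_id z).const_mul B)
    refine this.congr_deriv ?_
    field_simp
  have hb : ∀ z ∈ Icc x1 x, |E' z| ≤ (A * (hw χ δ z / z) + B) * E z := by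
    intro z hz
    have hz0 : 0 < z := lt_of_lt_of_le hx1p hz.1
    obtain ⟨b1, b4⟩ := gw_bounds hχ hκ c0 c2 hz.1 (hz.2.trans hxy)
    have b2 := phid_le χ δ φ d z
    have b5 := phisq_le χ δ φ d z
    have hN := Nn_nonneg χ δ φ d z
    have hg := gw_pos χ δ z
    have b6 := (hEN z hz).1
    have hG2 : 0 ≤ gw χ δ z * ((z - χ / (2 * z)) ^ 2 + (1 + χ / (2 * z ^ 2))) := by positivity
    set G2 := gw χ δ z * ((z - χ / (2 * z)) ^ 2 + (1 + χ / (2 * z ^ 2)))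
    set g := gw χ δ z
    set N := Nn χ δ φ d z
    have t1 : |(2 * g * κ - G2) * (φ z * d z)| ≤ (2 * g * κ + G2) * (N / 2) := by
      rw [abs_mul]
      have : |2 * g * κ - G2| ≤ 2 * g * κ + G2 := by
        have : 0 ≤ 2 * g * κ := by positivity
        rw [abs_le]; constructor <;> linarith
      exact mul_le_mul this b2 (abs_nonneg _) (by positivity)
    have t2 : |g * (z - χ / (2 * z)) * κ * φ z ^ 2| ≤ 1 * κ * (g * N) := by
      rw [abs_mul, abs_mul, abs_of_pos hκ, abs_of_nonneg (sq_nonneg (φ z))]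
      gcongr
    calc |E' z| ≤ |(2 * g * κ - G2) * (φ z * d z)| + |g * (z - χ / (2 * z)) * κ * φ z ^ 2| := abs_sub _ _
      _ ≤ (4 * κ * g + G2) * (N / 2) := by linarith
      _ ≤ (A * (hw χ δ z / z) + B) * (N / 2) := by gcongr
      _ ≤ (A * (hw χ δ z / z) + B) * E z := by
        have : 0 ≤ A * (hw χ δ z / z) + B := by
          have := hw_pos χ δ z
          positivity
        gcongr
        linarith
  have hexp : (-(2 * A / (χ + 2)) * hw χ δ x + B * x) - (-(2 * A / (χ + 2)) * hw χ δ x1 + B * x1)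
      ≤ A + 1 := by
    have e1 : hw χ δ x1 ≤ 1 / (χ + 2) := hw_le hχ hδ le_rfl
    have e2 : 1 / (χ + 2) ≤ 1 / 2 := by
      apply one_div_le_one_div_of_le <;> linarith
    have e3 := hw_pos χ δ x
    have e4 : B * x ≤ 1 := le_trans (by gcongr) c3
    have e5 : 2 * A / (χ + 2) ≤ A := by
      rw [div_le_iff₀ (by positivity)]; nlinarith
    have e6 : 0 ≤ 2 * A / (χ + 2) := by positivity
    have e7 : 0 ≤ B * x1 := by positivity
    have e8 : (2 * A / (χ + 2)) * hw χ δ x1 ≤ A * 1 := by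
      apply mul_le_mul e5 (by linarith) (hw_pos _ _ _).le hA0
    nlinarith [mul_nonneg e6 e3.le]
  have m1 := hEN x1 (left_mem_Icc.2 hx1)
  have m2 := hEN x (right_mem_Icc.2 hx1)
  have hN1 := Nn_nonneg χ δ φ d x1
  have hE1 : 0 ≤ E x1 := by linarith
  constructor
  · have := gron_lower hx1 hE hK (fun z hz => by
      have := neg_le_of_abs_le (hb z hz); linarith)
    have h3 : E x1 * Real.exp (-(A + 1)) ≤ E x := by
      refine le_trans ?_ this
      gcongr
    have := mul_le_mul_of_nonneg_left m1.1 (Real.exp_pos (-(A+1))).le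
    linarith [m2.2]
  · have := gron_upper hx1 hE hK (fun z hz => le_of_abs_le (hb z hz))
    have h3 : E x ≤ E x1 * Real.exp (A + 1) := by
      refine le_trans this ?_
      gcongr
    have := mul_le_mul_of_nonneg_left m1.2 (Real.exp_pos (A+1)).le
    linarith [m2.1]


theorem regionII {χ κ : ℝ} (hχ : 0 ≤ χ) (hκ : 0 < κ) :
    ∃ c C : ℝ, 0 < c ∧ 0 < C ∧ ∀ᶠ y in atTop, ∀ φ d, Sol χ κ (dl χ y) φ d →
      (∀ x, 0 ≤ x → x ≤ (χ + 2) * dl χ y → φ x ^ 2 ≤ C * dl χ y ^ 2 * d 0 ^ 2) ∧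
      ∀ x, (χ + 2) * dl χ y ≤ x → x ≤ y →
      c * dl χ y * d 0 ^ 2 ≤ Nn χ (dl χ y) φ d x ∧
      Nn χ (dl χ y) φ d x ≤ C * dl χ y * d 0 ^ 2 := by
  obtain ⟨L, hL, h1⟩ := regionI hχ hκ
  obtain ⟨L', hL', h2⟩ := regionII_aux hχ hκ
  have hn : 0 < χ + 2 := by linarith
  set a := Real.exp (-(χ / 2 * Real.log (χ + 2))) with ha
  have ha0 : 0 < a := Real.exp_pos _
  have ha1 : a ≤ 1 := by
    apply Real.exp_le_one_iff.2
    have := Real.log_nonneg (show 1 ≤ χ + 2 by linarith)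
    have : 0 ≤ χ / 2 * Real.log (χ + 2) := by positivity
    linarith
  refine ⟨Real.exp (-L') * (a / 2) * Real.exp (-L) / 4,
    4 * Real.exp L' * (2 + 1 / a) * Real.exp L, by positivity, by positivity, ?_⟩
  filter_upwards [h2, cond_ev hχ κ hκ] with y h2 ⟨c0, c1, c2, c3⟩ φ d S
  have hδ := dl_pos χ y
  have hδ1 : dl χ y ≤ 1 := by nlinarith
  have h2 := h2 φ d S
  have h1 := h1 _ hδ hδ1 φ d S
  set δ := dl χ y
  have hx1 : 0 < (χ + 2) * δ := by positivity
  have hg : gw χ δ ((χ + 2) * δ) = δ * a * Real.exp (((χ + 2) * δ) ^ 2 / 2) := by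
    have e : δ = Real.exp (Real.log δ) := (Real.exp_log hδ).symm
    rw [gw, Real.log_mul hn.ne' hδ.ne', ha]
    have e2 : δ * Real.exp (-(χ / 2 * Real.log (χ + 2))) * Real.exp (((χ + 2) * δ) ^ 2 / 2)
     = Real.exp (Real.log δ) * Real.exp (-(χ / 2 * Real.log (χ + 2))) *
      Real.exp (((χ + 2) * δ) ^ 2 / 2) := by rw [Real.exp_log hδ]
    rw [e2, ← Real.exp_add, ← Real.exp_add]
    congr 1
    ring
  have hgl : δ * a ≤ gw χ δ ((χ + 2) * δ) := by
    rw [hg]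
    have : 1 ≤ Real.exp (((χ + 2) * δ) ^ 2 / 2) := Real.one_le_exp (by positivity)
    have := mul_pos hδ ha0
    nlinarith
  have hgu : gw χ δ ((χ + 2) * δ) ≤ 2 * δ := by
    have := gw_le_small (χ := χ) (δ := δ) hx1 c1
    have h3 := hw_le hχ hδ (le_refl ((χ + 2) * δ))
    calc _ ≤ _ := this
      _ ≤ 2 * (1 / (χ + 2) * ((χ + 2) * δ)) := by gcongr
      _ = 2 * δ := by field_simp
  have hgp := gw_pos χ δ ((χ + 2) * δ)
  constructor
  · intro x hx0 hx
    have := (h1 x hx0 hx).2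
    have h4 : φ x ^ 2 / δ ^ 2 ≤ Real.exp L * d 0 ^ 2 := by nlinarith [sq_nonneg (d x)]
    rw [div_le_iff₀ (by positivity)] at h4
    refine h4.trans ?_
    have : Real.exp L ≤ 4 * Real.exp L' * (2 + 1 / a) * Real.exp L := by
      have e1 : 1 ≤ Real.exp L' := Real.one_le_exp hL'
      have e2 : 0 < 1 / a := by positivity
      have : 1 ≤ 4 * Real.exp L' * (2 + 1 / a) := by nlinarith
      nlinarith [Real.exp_pos L]
    calc Real.exp L * d 0 ^ 2 * δ ^ 2 ≤ (4 * Real.exp L' * (2 + 1 / a) * Real.exp L) * d 0 ^ 2 * δ ^ 2 := by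
          gcongr
      _ = _ := by ring
  · have h3 := h1 ((χ + 2) * δ) hx1.le le_rfl
    have n1 : Nn χ δ φ d ((χ + 2) * δ) ≤ δ * (2 + 1 / a) * (Real.exp L * d 0 ^ 2) := by
      unfold Nn
      calc gw χ δ ((χ + 2) * δ) * d ((χ + 2) * δ) ^ 2 + φ ((χ + 2) * δ) ^ 2 / gw χ δ ((χ + 2) * δ)
          ≤ (2 * δ) * d ((χ + 2) * δ) ^ 2 + φ ((χ + 2) * δ) ^ 2 / (δ * a) := by gcongr
        _ = δ * 2 * d ((χ + 2) * δ) ^ 2 + δ * (1 / a) * (φ ((χ + 2) * δ) ^ 2 / δ ^ 2) := by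
            field_simp
        _ ≤ δ * (2 + 1 / a) * (d ((χ + 2) * δ) ^ 2 + φ ((χ + 2) * δ) ^ 2 / δ ^ 2) := by
            have e1 : 0 ≤ δ * (1 / a) * d ((χ + 2) * δ) ^ 2 := by positivity
            have e2 : 0 ≤ δ * 2 * (φ ((χ + 2) * δ) ^ 2 / δ ^ 2) := by positivity
            nlinarith
        _ ≤ _ := by gcongr; exact h3.2
    have n2 : δ * (a / 2) * (Real.exp (-L) * d 0 ^ 2) ≤ Nn χ δ φ d ((χ + 2) * δ) := by
      unfold Nn
      calc δ * (a / 2) * (Real.exp (-L) * d 0 ^ 2)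
          ≤ δ * (a / 2) * (d ((χ + 2) * δ) ^ 2 + φ ((χ + 2) * δ) ^ 2 / δ ^ 2) := by
            gcongr; exact h3.1
        _ ≤ (δ * a) * d ((χ + 2) * δ) ^ 2 + δ / 2 * (φ ((χ + 2) * δ) ^ 2 / δ ^ 2) := by
            have e1 : 0 ≤ δ * a * d ((χ + 2) * δ) ^ 2 := by positivity
            have e2 : 0 ≤ δ * (φ ((χ + 2) * δ) ^ 2 / δ ^ 2) := by positivity
            nlinarith
        _ = (δ * a) * d ((χ + 2) * δ) ^ 2 + φ ((χ + 2) * δ) ^ 2 / (2 * δ) := by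
            field_simp
        _ ≤ _ := by gcongr
    intro x hx hxy
    obtain ⟨k1, k2⟩ := h2 x hx hxy
    constructor
    · have := mul_le_mul_of_nonneg_left n2 (Real.exp_pos (-L')).le
      linarith
    · refine k2.trans ?_
      calc _ ≤ 4 * Real.exp L' * (δ * (2 + 1 / a) * (Real.exp L * d 0 ^ 2)) := by gcongr
        _ = _ := by ring

theorem le_of_mono_tendsto {f : ℝ → ℝ} {a l : ℝ} (hf : MonotoneOn f (Ici a))
    (ht : Tendsto f atTop (𝓝 l)) : ∀ x ∈ Ici a, f x ≤ l := by
  intro x hx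
  apply ge_of_tendsto ht
  filter_upwards [eventually_ge_atTop x] with z hz
  exact hf hx (le_trans hx hz) hz

theorem mono_of_deriv {f f' : ℝ → ℝ} {a : ℝ} (hf : ∀ x ∈ Ici a, HasDerivAt f (f' x) x)
    (h : ∀ x ∈ Ici a, 0 ≤ f' x) : MonotoneOn f (Ici a) := by
  apply monotoneOn_of_hasDerivWithinAt_nonneg (convex_Ici a) (f' := f')
  · exact fun x hx => (hf x hx).continuousAt.continuousWithinAt
  · intro x hx
    exact (hf x (interior_subset hx)).hasDerivWithinAt
  · intro x hx
    exact h x (interior_subset hx)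

set_option maxHeartbeats 1000000 in
/-- Region III and IV. -/
theorem regionIV {χ s : ℝ} (hχ : 0 ≤ χ) (hs : 0 < s) :
    ∃ C B : ℝ, 0 < C ∧ 0 < B ∧ ∀ᶠ y in atTop, ∀ φ d, Sol χ (2 * s ^ 2) (dl χ y) φ d →
      (∀ x, y ≤ x → x ≤ 2 * y →
        φ x ^ 2 ≤ C * dl χ y ^ (3/4 : ℝ) * Real.exp (B * y) * d 0 ^ 2) ∧
      (∀ x, 2 * y ≤ x → φ x ^ 2 ≤ C * dl χ y ^ (3/4 : ℝ) * Real.exp (B * y) * d 0 ^ 2 *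
        Real.exp (-(2 * s) * (x - 2 * y))) := by
  have hκ : 0 < 2 * s ^ 2 := by positivity
  set κ := 2 * s ^ 2 with hκdef
  obtain ⟨c0, C0, hc0, hC0, hII⟩ := regionII hχ hκ
  refine ⟨2 * C0 / κ, χ / 2 + 4 * s, by positivity, by positivity, ?_⟩
  have hZ : ∀ᶠ z : ℝ in atTop, χ * z - 2 / 3 * z ^ 2 ≤ Real.log (κ / 2) := by
    have : Tendsto (fun z : ℝ => z * (2 / 3 * z - χ)) atTop atTop := by
      apply Tendsto.atTop_mul_atTop₀ tendsto_id
      apply tendsto_atTop_add_const_right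
      exact Tendsto.const_mul_atTop (by positivity) tendsto_id
    filter_upwards [this.eventually_ge_atTop (-Real.log (κ / 2))] with z hz
    nlinarith
  obtain ⟨Z, hZ⟩ := eventually_atTop.1 hZ
  filter_upwards [hII, cond_ev hχ κ hκ, eventually_ge_atTop Z, eventually_ge_atTop (χ + 1)] with
    y hII ⟨c0, c1, c2, c3⟩ hyZ hyχ φ d S
  have hII := (hII φ d S).2 y (by linarith) le_rfl
  have hδ := dl_pos χ y
  have hy0 : 0 < y := by linarith
  have hsq : ∀ z, 0 < z → (dl χ y) ^ (-(χ + 2)) * (|z| ^ χ * Real.exp (-z ^ 2)) = 1 / gw χ (dl χ y) z ^ 2 :=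
    fun z hz => gw_sq hδ hz
  have hF : ∀ z, 0 < z → HasDerivAt (fun z => d z ^ 2 + φ z ^ 2 / gw χ (dl χ y) z ^ 2 + κ * φ z ^ 2)
      (4 * κ * φ z * d z - 2 * (z - χ / (2 * z)) * φ z ^ 2 / gw χ (dl χ y) z ^ 2) z := by
    intro z hz
    have hg := gw_pos χ (dl χ y) z
    have g1 := gw_deriv (χ := χ) (δ := dl χ y) hz
    have d1 := S.hd z
    rw [hsq z hz] at d1
    have := ((d1.pow 2).add (((S.hφ z).pow 2).div (g1.pow 2) (pow_pos hg 2).ne')).add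
      (((S.hφ z).pow 2).const_mul κ)
    refine this.congr_deriv ?_
    simp only [Pi.pow_apply]
    push_cast
    field_simp
    ring
  have hgy : gw χ (dl χ y) y = dl χ y ^ (1/4 : ℝ) * Real.exp (-(χ / 2 * Real.log y)) := by
    rw [dl_quarter hχ, gw, ← Real.exp_add]
    congr 1
    ring
  have hFy : d y ^ 2 + φ y ^ 2 / gw χ (dl χ y) y ^ 2 + κ * φ y ^ 2 ≤
      2 * C0 * dl χ y ^ (3/4 : ℝ) * Real.exp (χ / 2 * y) * d 0 ^ 2 := by
    have hg := gw_pos χ (dl χ y) y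
    have hgq : gw χ (dl χ y) y ≤ dl χ y ^ (1/4 : ℝ) := gw_le_large hχ (by linarith) le_rfl
    have hq1 : κ * gw χ (dl χ y) y ≤ 1 := by
      refine le_trans ?_ c3
      have hq0 : 0 < dl χ y ^ (1/4 : ℝ) := Real.rpow_pos_of_pos hδ _
      calc κ * gw χ (dl χ y) y ≤ κ * dl χ y ^ (1/4 : ℝ) := by gcongr
        _ = dl χ y ^ (1/4 : ℝ) * κ * 1 := by ring
        _ ≤ _ := by
          gcongr
          · nlinarith [sq_nonneg χ]
          · linarith
    have hgle1 : gw χ (dl χ y) y ≤ 1 := by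
      refine hgq.trans ?_
      have hq0 : 0 < dl χ y ^ (1/4 : ℝ) := Real.rpow_pos_of_pos hδ _
      nlinarith
    have e1 : d y ^ 2 + φ y ^ 2 / gw χ (dl χ y) y ^ 2 + κ * φ y ^ 2 ≤
        2 / gw χ (dl χ y) y * Nn χ (dl χ y) φ d y := by
      have : 2 / gw χ (dl χ y) y * Nn χ (dl χ y) φ d y = 2 * d y ^ 2 + 2 * (φ y ^ 2 / gw χ (dl χ y) y ^ 2) := by
        unfold Nn; field_simp
      rw [this]
      have : κ * φ y ^ 2 ≤ φ y ^ 2 / gw χ (dl χ y) y ^ 2 := by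
        rw [le_div_iff₀ (by positivity)]
        have : κ * gw χ (dl χ y) y ^ 2 ≤ 1 := by nlinarith
        nlinarith [sq_nonneg (φ y)]
      nlinarith [sq_nonneg (d y)]
    have e2 : 1 / gw χ (dl χ y) y ≤ dl χ y ^ (-(1/4) : ℝ) * Real.exp (χ / 2 * y) := by
      rw [hgy, Real.exp_neg, Real.rpow_neg hδ.le]
      have : Real.exp (χ / 2 * Real.log y) ≤ Real.exp (χ / 2 * y) := by
        apply Real.exp_le_exp.2
        have := Real.log_le_self hy0.le
        gcongr
      have hq0 : 0 < dl χ y ^ (1/4 : ℝ) := Real.rpow_pos_of_pos hδ _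
      calc 1 / (dl χ y ^ (1/4 : ℝ) * (Real.exp (χ / 2 * Real.log y))⁻¹)
          = (dl χ y ^ (1/4 : ℝ))⁻¹ * Real.exp (χ / 2 * Real.log y) := by field_simp
        _ ≤ _ := by gcongr
    calc _ ≤ _ := e1
      _ = 2 * (1 / gw χ (dl χ y) y) * Nn χ (dl χ y) φ d y := by ring
      _ ≤ 2 * (dl χ y ^ (-(1/4) : ℝ) * Real.exp (χ / 2 * y)) * (C0 * dl χ y * d 0 ^ 2) := by
        apply mul_le_mul _ hII.2 (Nn_nonneg _ _ _ _ _) (by positivity)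
        gcongr
      _ = 2 * C0 * (dl χ y ^ (-(1/4) : ℝ) * dl χ y) * Real.exp (χ / 2 * y) * d 0 ^ 2 := by ring
      _ = _ := by
        rw [← Real.rpow_add_one hδ.ne']
        norm_num
  have hr : ∀ z, y ≤ z → 0 ≤ z - χ / (2 * z) := by
    intro z hz
    have hz0 : 0 < z := by linarith
    rw [sub_nonneg, div_le_iff₀ (by positivity)]
    nlinarith
  have hIII : ∀ x, y ≤ x → x ≤ 2 * y →
      κ * φ x ^ 2 ≤ 2 * C0 * dl χ y ^ (3/4 : ℝ) * Real.exp (χ / 2 * y) * d 0 ^ 2 * Real.exp (4 * s * y) := by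
    intro x hx hx2
    have hg := gw_pos χ (dl χ y) x
    have := gron_upper (K := fun z => 4 * s * z) (k := fun z => 4 * s) hx
      (fun z hz => hF z (by linarith [hz.1]))
      (fun z hz => by simpa using (hasDerivAt_id z).const_mul (4 * s))
      (fun z hz => by
        have hg := gw_pos χ (dl χ y) z
        have e1 : 0 ≤ 2 * (z - χ / (2 * z)) * φ z ^ 2 / gw χ (dl χ y) z ^ 2 := by
          have := hr z hz.1
          positivity
        have e2 : 0 ≤ φ z ^ 2 / gw χ (dl χ y) z ^ 2 := by positivity
        have e3 : 4 * κ * φ z * d z ≤ 4 * s * (d z ^ 2 + κ * φ z ^ 2) := by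
          rw [hκdef]
          nlinarith [mul_nonneg hs.le (sq_nonneg (d z - s * φ z)), mul_nonneg hs.le (sq_nonneg (s * φ z))]
        nlinarith [mul_nonneg hs.le e2])
    have e4 : Real.exp (4 * s * x - 4 * s * y) ≤ Real.exp (4 * s * y) := by
      apply Real.exp_le_exp.2; nlinarith
    calc κ * φ x ^ 2 ≤ d x ^ 2 + φ x ^ 2 / gw χ (dl χ y) x ^ 2 + κ * φ x ^ 2 := by
          have : 0 ≤ φ x ^ 2 / gw χ (dl χ y) x ^ 2 := by positivity
          nlinarith [sq_nonneg (d x)]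
      _ ≤ _ := this
      _ ≤ _ := by
        refine mul_le_mul hFy e4 (Real.exp_pos _).le (by positivity)
  have hIII' : ∀ x, y ≤ x → x ≤ 2 * y →
        φ x ^ 2 ≤ 2 * C0 / κ * dl χ y ^ (3/4 : ℝ) * Real.exp ((χ / 2 + 4 * s) * y) * d 0 ^ 2 := by
    intro x hx hx2
    have := hIII x hx hx2
    have e : 2 * C0 / κ * dl χ y ^ (3/4 : ℝ) * Real.exp ((χ / 2 + 4 * s) * y) * d 0 ^ 2
      = (2 * C0 * dl χ y ^ (3/4 : ℝ) * Real.exp (χ / 2 * y) * d 0 ^ 2 * Real.exp (4 * s * y)) / κ := by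
      rw [add_mul, Real.exp_add]; field_simp
    rw [e, le_div_iff₀ hκ]
    linarith
  refine ⟨hIII', ?_⟩
  have hP : ∀ z, 2 * y ≤ z → 1 / gw χ (dl χ y) z ^ 2 ≤ κ / 2 := by
    intro z hz
    have hz0 : 0 < z := by linarith
    rw [gw, one_div, ← Real.exp_nat_mul, ← Real.exp_neg, log_dl]
    rw [← Real.le_log_iff_exp_le (by positivity)]
    refine le_trans ?_ (hZ z (by linarith))
    have hlz := Real.log_le_self hz0.le
    have e1 : (χ + 2) * (y ^ 2 / (χ + 3 / 2)) ≤ 4 / 3 * y ^ 2 := by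
      rw [← mul_div_assoc, div_le_iff₀ (by positivity)]
      nlinarith [mul_nonneg hχ (sq_nonneg y)]
    have e2 : 4 * y ^ 2 ≤ z ^ 2 := by nlinarith
    have e3 : χ * Real.log z ≤ χ * z := by gcongr
    push_cast
    nlinarith
  have s1 : ∀ z ∈ Ici (2 * y), φ z * d z ≤ 0 := by
    apply le_of_mono_tendsto
    · apply mono_of_deriv (f' := fun z => d z * d z + φ z *
        ((κ - dl χ y ^ (-(χ + 2)) * (|z| ^ χ * Real.exp (-z ^ 2))) * φ z))
      · intro z hz
        exact (S.hφ z).mul (S.hd z)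
      · intro z hz
        have hz' : 2 * y ≤ z := hz
        rw [hsq z (by linarith)]
        have := hP z hz
        nlinarith [mul_self_nonneg (d z), mul_nonneg (show 0 ≤ κ - 1 / gw χ (dl χ y) z ^ 2 by linarith) (sq_nonneg (φ z))]
    · simpa using S.tφ.mul S.td
  have s2 : ∀ z ∈ Ici (2 * y), κ / 2 * φ z ^ 2 - d z ^ 2 ≤ 0 := by
    apply le_of_mono_tendsto
    · apply mono_of_deriv (f' := fun z => κ / 2 * (2 * φ z * d z) - 2 * d z *
        ((κ - dl χ y ^ (-(χ + 2)) * (|z| ^ χ * Real.exp (-z ^ 2))) * φ z))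
      · intro z hz
        have := (((S.hφ z).pow 2).const_mul (κ / 2)).sub ((S.hd z).pow 2)
        refine this.congr_deriv ?_
        push_cast; ring
      · intro z hz
        have hz' : 2 * y ≤ z := hz
        rw [hsq z (by linarith)]
        have := hP z hz
        have h2 := s1 z hz
        nlinarith [mul_nonneg (show 0 ≤ κ / 2 - 1 / gw χ (dl χ y) z ^ 2 by linarith) (neg_nonneg.2 h2)]
    · simpa using ((S.tφ.pow 2).const_mul (κ / 2)).sub (S.td.pow 2)
  intro x hx
  have := gron_upper (E := fun z => φ z ^ 2) (E' := fun z => 2 * φ z * d z)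
    (K := fun z => -(2 * s) * z) (k := fun z => -(2 * s)) hx
    (fun z hz => by
      refine ((S.hφ z).pow 2).congr_deriv ?_
      push_cast; ring)
    (fun z hz => by simpa using (hasDerivAt_id z).const_mul (-(2 * s)))
    (fun z hz => by
      have h1 := s1 z hz.1
      have h2 := s2 z hz.1
      have h3 : s * φ z ^ 2 ≤ -(φ z * d z) := by
        apply le_of_sq_le_sq _ (by linarith)
        have : s ^ 2 * φ z ^ 2 ≤ d z ^ 2 := by rw [hκdef] at h2; linarith
        nlinarith [mul_le_mul_of_nonneg_left this (sq_nonneg (φ z))]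
      nlinarith)
  refine this.trans ?_
  have e : -(2 * s) * x - -(2 * s) * (2 * y) = -(2 * s) * (x - 2 * y) := by ring
  rw [e]
  apply mul_le_mul_of_nonneg_right _ (Real.exp_pos _).le
  exact hIII' _ (by linarith) le_rfl


/-- unnormalized density -/
noncomputable def pt (χ x : ℝ) : ℝ := |x| ^ χ * Real.exp (-x ^ 2)

theorem pt_cont {χ : ℝ} (hχ : 0 ≤ χ) : Continuous (pt χ) := by
  unfold pt
  exact (continuous_abs.rpow_const (fun _ => Or.inr hχ)).mul (by fun_prop)

theorem pt_nonneg (χ x : ℝ) : 0 ≤ pt χ x := by unfold pt; positivity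

theorem pt_eq {χ δ x : ℝ} (hδ : 0 < δ) (hx : 0 < x) :
    pt χ x = δ ^ (χ + 2) / gw χ δ x ^ 2 := by
  have h := gw_sq (χ := χ) hδ hx
  rw [Real.rpow_neg hδ.le] at h
  have : 0 < δ ^ (χ + 2) := Real.rpow_pos_of_pos hδ _
  unfold pt
  field_simp at h ⊢
  linarith

theorem gw_le_one {χ y x : ℝ} (hχ : 0 ≤ χ) (hy : 2 ≤ y)
    (c2 : dl χ y ^ (1/4 : ℝ) * (y + χ / 2) ≤ 1)
    (hx1 : (χ + 2) * dl χ y ≤ x) (hxy : x ≤ y) : gw χ (dl χ y) x ≤ 1 := by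
  have hδ := dl_pos χ y
  have hx : 0 < x := lt_of_lt_of_le (by positivity) hx1
  have hq : 0 < dl χ y ^ (1/4 : ℝ) := Real.rpow_pos_of_pos hδ _
  rcases le_total x 1 with h1 | h1
  · have e1 := gw_le_small (χ := χ) (δ := dl χ y) hx h1
    have e2 := hw_le hχ hδ hx1
    have e3 : 1 / (χ + 2) ≤ 1 / 2 := by
      apply one_div_le_one_div_of_le <;> linarith
    have := hw_pos χ (dl χ y) x
    nlinarith
  · refine (gw_le_large hχ h1 hxy).trans ?_
    nlinarith

set_option maxHeartbeats 1000000 in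
theorem pointwise {χ s : ℝ} (hχ : 0 ≤ χ) (hs : 0 < s) :
    ∃ C B : ℝ, 0 < C ∧ 0 < B ∧ ∀ᶠ y in atTop, ∀ φ d, Sol χ (2 * s ^ 2) (dl χ y) φ d →
      ∀ x, 0 ≤ x → φ x ^ 2 ≤ C * dl χ y ^ (3/4 : ℝ) * Real.exp (B * y) * d 0 ^ 2 *
        Real.exp (-(2 * s) * x) := by
  have hκ : 0 < 2 * s ^ 2 := by positivity
  obtain ⟨c0, C0, hc0, hC0, hII⟩ := regionII hχ hκ
  obtain ⟨C1, B, hC1, hB, hIV⟩ := regionIV hχ hs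
  refine ⟨C0 + C1, B + 4 * s, by positivity, by positivity, ?_⟩
  filter_upwards [hII, hIV, cond_ev hχ _ hκ] with y hII hIV ⟨k0, k1, k2, k3⟩ φ d S x hx
  obtain ⟨I1, II1⟩ := hII φ d S
  obtain ⟨III1, IV1⟩ := hIV φ d S
  have hδ := dl_pos χ y
  have hδ1 : dl χ y ≤ 1 := by nlinarith
  have hD : 0 ≤ d 0 ^ 2 := sq_nonneg _
  set δ := dl χ y
  have hq : 0 < δ ^ (3/4 : ℝ) := Real.rpow_pos_of_pos hδ _
  have hδq : δ ≤ δ ^ (3/4 : ℝ) := by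
    nth_rw 1 [← Real.rpow_one δ]
    exact Real.rpow_le_rpow_of_exponent_ge hδ hδ1 (by norm_num)
  have hB1 : 1 ≤ Real.exp (B * y) := Real.one_le_exp (by nlinarith)
  have e1 : (C0 + C1) * δ ^ (3/4 : ℝ) * Real.exp ((B + 4 * s) * y) * d 0 ^ 2 * Real.exp (-(2 * s) * x)
    = (C0 + C1) * δ ^ (3/4 : ℝ) * Real.exp (B * y) * d 0 ^ 2 * Real.exp (-(2 * s) * (x - 2 * y)) := by
    have : Real.exp ((B + 4 * s) * y) * Real.exp (-(2 * s) * x)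
      = Real.exp (B * y) * Real.exp (-(2 * s) * (x - 2 * y)) := by
      rw [← Real.exp_add, ← Real.exp_add]; congr 1; ring
    calc _ = (C0 + C1) * δ ^ (3/4 : ℝ) * d 0 ^ 2 * (Real.exp ((B + 4 * s) * y) * Real.exp (-(2 * s) * x)) := by ring
      _ = _ := by rw [this]; ring
  rw [e1]
  rcases le_total (2 * y) x with h2 | h2
  · refine (IV1 x h2).trans ?_
    gcongr
    linarith
  have hx1 : 1 ≤ Real.exp (-(2 * s) * (x - 2 * y)) := Real.one_le_exp (by nlinarith)
  suffices h : φ x ^ 2 ≤ (C0 + C1) * δ ^ (3/4 : ℝ) * Real.exp (B * y) * d 0 ^ 2 by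
    refine h.trans ?_
    exact le_mul_of_one_le_right (by positivity) hx1
  rcases le_total y x with h3 | h3
  · refine (III1 x h3 h2).trans ?_
    gcongr
    linarith
  suffices h : φ x ^ 2 ≤ C0 * δ * d 0 ^ 2 by
    refine h.trans ?_
    calc C0 * δ * d 0 ^ 2 = C0 * δ * 1 * d 0 ^ 2 := by ring
      _ ≤ _ := by
        gcongr
        linarith
  rcases le_total ((χ + 2) * δ) x with h4 | h4
  · have b1 := phisq_le χ δ φ d x
    have b2 := (II1 x h4 h3).2
    have b3 := gw_le_one hχ k0 k2 h4 h3
    have b4 := Nn_nonneg χ δ φ d x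
    nlinarith
  · refine (I1 x hx h4).trans ?_
    have : δ ^ 2 ≤ δ := by nlinarith
    gcongr

theorem int_exp {s : ℝ} (hs : 0 < s) : IntegrableOn (fun x => Real.exp (-s * x)) (Ioi 0) ∧
    ∫ x in Ioi (0:ℝ), Real.exp (-s * x) = 1 / s := by
  refine ⟨exp_neg_integrableOn_Ioi 0 hs, ?_⟩
  have := integral_exp_mul_Ioi (a := -s) (by linarith) 0
  rw [this]; simp

theorem L1_small {χ s : ℝ} (hχ : 0 ≤ χ) (hs : 0 < s) (ε : ℝ) (hε : 0 < ε) :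
    ∀ᶠ y in atTop, ∀ φ d, Sol χ (2 * s ^ 2) (dl χ y) φ d →
      IntegrableOn φ (Ioi 0) ∧ ∫ x in Ioi (0:ℝ), |φ x| ≤ ε * |d 0| := by
  obtain ⟨C, B, hC, hB, h⟩ := pointwise hχ hs
  filter_upwards [h, small_ev hχ (3/4) B ((ε * s) ^ 2 / C) (by norm_num) (by positivity)]
    with y h h2 φ d S
  have h := h φ d S
  have hb : ∀ x, 0 ≤ x → |φ x| ≤ ε * s * |d 0| * Real.exp (-s * x) := by
    intro x hx
    apply abs_le_of_sq_le_sq _ (by positivity)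
    refine (h x hx).trans ?_
    rw [le_div_iff₀ hC] at h2
    have e : (ε * s * |d 0| * Real.exp (-s * x)) ^ 2 =
        (ε * s) ^ 2 * d 0 ^ 2 * Real.exp (-(2 * s) * x) := by
      rw [mul_pow, mul_pow, sq_abs, ← Real.exp_nat_mul]
      push_cast; ring_nf
    rw [e]
    gcongr
    linarith
  have hcont : Continuous φ := continuous_iff_continuousAt.2 fun x => (S.hφ x).continuousAt
  obtain ⟨i1, i2⟩ := int_exp hs
  have i3 := i1.const_mul (ε * s * |d 0|)
  have hint : IntegrableOn φ (Ioi 0) := by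
    refine Integrable.mono' i3 hcont.aestronglyMeasurable ?_
    filter_upwards [ae_restrict_mem measurableSet_Ioi] with x hx
    exact hb x (le_of_lt hx)
  refine ⟨hint, ?_⟩
  calc ∫ x in Ioi (0:ℝ), |φ x| ≤ ∫ x in Ioi (0:ℝ), ε * s * |d 0| * Real.exp (-s * x) := by
        apply setIntegral_mono_on hint.abs i3 measurableSet_Ioi
        exact fun x hx => hb x (le_of_lt hx)
    _ = ε * |d 0| := by
        rw [integral_const_mul, i2]; field_simp

set_option maxHeartbeats 1000000 in
theorem mass_upper {χ s : ℝ} (hχ : 0 ≤ χ) (hs : 0 < s) :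
    ∃ C, 0 < C ∧ ∀ᶠ y in atTop, ∀ φ d, Sol χ (2 * s ^ 2) (dl χ y) φ d →
      ∫ x in Ioi (0:ℝ), pt χ x * φ x ^ 2 ≤ C * dl χ y ^ ((χ + 2) / 2 + 1) * d 0 ^ 2 := by
  have hκ : 0 < 2 * s ^ 2 := by positivity
  obtain ⟨c0, C0, hc0, hC0, hII⟩ := regionII hχ hκ
  obtain ⟨C1, B, hC1, hB, hpw⟩ := pointwise hχ hs
  set K1 := (χ + 2) ^ χ * C0 with hK1
  set K2 := C0 * Real.exp ((χ / 2 + 1) ^ 2 / 2) with hK2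
  have hK1p : 0 < K1 := by positivity
  have hK2p : 0 < K2 := by positivity
  set K := K1 * Real.exp 1 + K2 + C1 with hK
  set θ := min 1 (2 * s) with hθ
  have hθp : 0 < θ := by positivity
  have hKp : 0 < K := by positivity
  refine ⟨K / θ, by positivity, ?_⟩
  filter_upwards [hII, hpw, cond_ev hχ _ hκ, eventually_ge_atTop χ,
    small_ev hχ (1/4) (B + χ) 1 (by norm_num) one_pos] with
    y hII hpw ⟨k0, k1, k2, k3⟩ hyχ hsm φ d S
  obtain ⟨I1, II1⟩ := hII φ d S
  have hpw := hpw φ d S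
  have hδ := dl_pos χ y
  have hδ1 : dl χ y ≤ 1 := by nlinarith
  have hD : 0 ≤ d 0 ^ 2 := sq_nonneg _
  have hlog := log_dl χ y
  set δ := dl χ y
  have hT : 0 < δ ^ ((χ + 2) / 2 + 1) := Real.rpow_pos_of_pos hδ _
  set T := δ ^ ((χ + 2) / 2 + 1) with hTdef
  have hθ1 : θ ≤ 1 := min_le_left _ _
  have hθ2 : θ ≤ 2 * s := min_le_right _ _
  have key : ∀ x, 0 < x → pt χ x * φ x ^ 2 ≤ K * T * d 0 ^ 2 * Real.exp (-θ * x) := by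
    intro x hx
    have hpt := pt_nonneg χ x
    have ex1 : Real.exp (-1 * x) ≤ Real.exp (-θ * x) := by
      apply Real.exp_le_exp.2; nlinarith
    have ex2 : Real.exp (-(2 * s) * x) ≤ Real.exp (-θ * x) := by
      apply Real.exp_le_exp.2; nlinarith
    rcases le_total x ((χ + 2) * δ) with h1 | h1
    · have a1 : pt χ x ≤ (χ + 2) ^ χ * δ ^ χ := by
        unfold pt
        rw [abs_of_pos hx, ← Real.mul_rpow (by positivity) hδ.le]
        have : Real.exp (-x ^ 2) ≤ 1 := Real.exp_le_one_iff.2 (by nlinarith [sq_nonneg x])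
        calc x ^ χ * Real.exp (-x ^ 2) ≤ ((χ + 2) * δ) ^ χ * 1 := by gcongr
          _ = _ := mul_one _
      have a2 := I1 x hx.le h1
      have a3 : δ ^ χ * δ ^ 2 ≤ T := by
        rw [← Real.rpow_natCast, ← Real.rpow_add hδ]
        apply Real.rpow_le_rpow_of_exponent_ge hδ hδ1
        push_cast; linarith
      have a4 : 1 ≤ Real.exp 1 * Real.exp (-θ * x) := by
        rw [← Real.exp_add]; apply Real.one_le_exp; nlinarith
      calc pt χ x * φ x ^ 2 ≤ ((χ + 2) ^ χ * δ ^ χ) * (C0 * δ ^ 2 * d 0 ^ 2) := by gcongr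
        _ = K1 * (δ ^ χ * δ ^ 2) * d 0 ^ 2 * 1 := by rw [hK1]; ring
        _ ≤ K1 * T * d 0 ^ 2 * (Real.exp 1 * Real.exp (-θ * x)) := by gcongr
        _ = (K1 * Real.exp 1) * T * d 0 ^ 2 * Real.exp (-θ * x) := by ring
        _ ≤ _ := by gcongr; linarith
    rcases le_total x y with h2 | h2
    · have hg := gw_pos χ δ x
      have a1 := phisq_le χ δ φ d x
      have a2 := (II1 x h1 h2).2
      have a3 : pt χ x * gw χ δ x ≤ δ ^ ((χ + 2) / 2) * (Real.exp ((χ / 2 + 1) ^ 2 / 2) * Real.exp (-1 * x)) := by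
        rw [pt_eq hδ hx]
        have : δ ^ (χ + 2) / gw χ δ x ^ 2 * gw χ δ x = δ ^ (χ + 2) * (gw χ δ x)⁻¹ := by field_simp
        rw [this, gw, ← Real.exp_neg, Real.rpow_def_of_pos hδ, Real.rpow_def_of_pos hδ, ← Real.exp_add,
          ← Real.exp_add, ← Real.exp_add]
        apply Real.exp_le_exp.2
        have hl := Real.log_le_self hx.le
        have : χ / 2 * Real.log x ≤ χ / 2 * x := by gcongr
        nlinarith [sq_nonneg (x - (χ / 2 + 1))]
      have a4 : δ ^ ((χ + 2) / 2) * δ = T := by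
        rw [hTdef, Real.rpow_add_one hδ.ne']
      calc pt χ x * φ x ^ 2 ≤ pt χ x * (gw χ δ x * (C0 * δ * d 0 ^ 2)) := by
            gcongr
            exact a1.trans (by gcongr)
        _ = (pt χ x * gw χ δ x) * (C0 * δ * d 0 ^ 2) := by ring
        _ ≤ (δ ^ ((χ + 2) / 2) * (Real.exp ((χ / 2 + 1) ^ 2 / 2) * Real.exp (-1 * x))) * (C0 * δ * d 0 ^ 2) := by
            gcongr
        _ = K2 * (δ ^ ((χ + 2) / 2) * δ) * d 0 ^ 2 * Real.exp (-1 * x) := by rw [hK2]; ring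
        _ = K2 * T * d 0 ^ 2 * Real.exp (-1 * x) := by rw [a4]
        _ ≤ K * T * d 0 ^ 2 * Real.exp (-θ * x) := by
            gcongr
            have : 0 < K1 * Real.exp 1 := by positivity
            linarith
    · have a1 := hpw x hx.le
      have a2 : pt χ x ≤ δ ^ (χ + 3 / 2) * Real.exp (χ * y) := by
        unfold pt
        rw [abs_of_pos hx, Real.rpow_def_of_pos hx, Real.rpow_def_of_pos hδ, hlog, ← Real.exp_add,
          ← Real.exp_add]
        apply Real.exp_le_exp.2
        have hl := Real.log_le_self hx.le
        have : Real.log x * χ ≤ x * χ := by gcongr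
        have e : -(y ^ 2 / (χ + 3 / 2)) * (χ + 3 / 2) = - y ^ 2 := by field_simp
        rw [e]
        nlinarith
      have a3 : δ ^ (χ + 3 / 2) * δ ^ (3/4 : ℝ) ≤ T * δ ^ (1/4 : ℝ) := by
        rw [hTdef, ← Real.rpow_add hδ, ← Real.rpow_add hδ]
        apply Real.rpow_le_rpow_of_exponent_ge hδ hδ1
        linarith
      calc pt χ x * φ x ^ 2 ≤ (δ ^ (χ + 3 / 2) * Real.exp (χ * y)) * (C1 * δ ^ (3/4 : ℝ) * Real.exp (B * y) * d 0 ^ 2 *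
        Real.exp (-(2 * s) * x)) := by gcongr
        _ = C1 * (δ ^ (χ + 3 / 2) * δ ^ (3/4 : ℝ)) * Real.exp ((B + χ) * y) * d 0 ^ 2 * Real.exp (-(2 * s) * x) := by
          rw [add_mul, Real.exp_add]; ring
        _ ≤ C1 * (T * δ ^ (1/4 : ℝ)) * Real.exp ((B + χ) * y) * d 0 ^ 2 * Real.exp (-θ * x) := by gcongr
        _ = C1 * T * (δ ^ (1/4 : ℝ) * Real.exp ((B + χ) * y)) * d 0 ^ 2 * Real.exp (-θ * x) := by ring
        _ ≤ C1 * T * 1 * d 0 ^ 2 * Real.exp (-θ * x) := by gcongr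
        _ ≤ _ := by
          rw [mul_one]
          gcongr
          have : 0 < K1 * Real.exp 1 := by positivity
          linarith
  have hcont : Continuous φ := continuous_iff_continuousAt.2 fun x => (S.hφ x).continuousAt
  obtain ⟨i1, i2⟩ := int_exp hθp
  have i3 := i1.const_mul (K * T * d 0 ^ 2)
  have hint : IntegrableOn (fun x => pt χ x * φ x ^ 2) (Ioi 0) := by
    refine Integrable.mono' i3 ((pt_cont hχ).mul (hcont.pow 2)).aestronglyMeasurable ?_
    filter_upwards [ae_restrict_mem measurableSet_Ioi] with x hx
    rw [Real.norm_of_nonneg (mul_nonneg (pt_nonneg _ _) (sq_nonneg _))]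
    exact key x hx
  calc ∫ x in Ioi (0:ℝ), pt χ x * φ x ^ 2 ≤ ∫ x in Ioi (0:ℝ), K * T * d 0 ^ 2 * Real.exp (-θ * x) := by
        apply setIntegral_mono_on hint i3 measurableSet_Ioi
        exact fun x hx => key x hx
    _ = _ := by
        rw [integral_const_mul, i2]; field_simp

set_option maxHeartbeats 1000000 in
theorem mass_lower {χ κ : ℝ} (hχ : 0 ≤ χ) (hκ : 0 < κ) :
    ∃ c, 0 < c ∧ ∀ᶠ y in atTop, ∀ φ d, Sol χ κ (dl χ y) φ d →
      IntegrableOn (fun x => pt χ x * φ x ^ 2) (Ioi 0) →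
      c * dl χ y ^ ((χ + 2) / 2 + 1) * d 0 ^ 2 ≤ ∫ x in Ioi (0:ℝ), pt χ x * φ x ^ 2 := by
  obtain ⟨c0, C0, hc0, hC0, hII⟩ := regionII hχ hκ
  set M := (1 + (2 + χ / 2) + κ) * C0 with hM
  have hMp : 0 < M := by positivity
  set b := Real.exp 2 with hb
  have hbp : 0 < b := Real.exp_pos 2
  refine ⟨c0 / (4 * b), by positivity, ?_⟩
  filter_upwards [hII, cond_ev hχ _ hκ, small_ev hχ (1/4) 0 (c0 / (4 * M)) (by norm_num) (by positivity)] with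
    y hII ⟨k0, k1, k2, k3⟩ hsm φ d S hint
  have II1 := (hII φ d S).2
  have hδ := dl_pos χ y
  have hD : 0 ≤ d 0 ^ 2 := sq_nonneg _
  have hgl : ∀ x ∈ Icc (1:ℝ) 2, gw χ (dl χ y) x ≤ dl χ y ^ (1/4 : ℝ) := fun x hx =>
    gw_le_large hχ hx.1 (hx.2.trans k0)
  set δ := dl χ y
  set q := δ ^ (1/4 : ℝ) with hq
  have hqp : 0 < q := Real.rpow_pos_of_pos hδ _
  have hq1 : q ≤ 1 := by nlinarith
  have hsm2 : q * M ≤ c0 / 4 := by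
    simp only [zero_mul, Real.exp_zero, mul_one] at hsm
    rw [le_div_iff₀ (by positivity)] at hsm
    linarith
  set V := δ ^ ((χ + 2) / 2) with hV
  have hVp : 0 < V := Real.rpow_pos_of_pos hδ _
  have hcont : Continuous φ := continuous_iff_continuousAt.2 fun x => (S.hφ x).continuousAt
  have hpc : Continuous (fun x => pt χ x * φ x ^ 2) := (pt_cont hχ).mul (hcont.pow 2)
  have hN : ∀ x ∈ Icc (1:ℝ) 2, c0 * δ * d 0 ^ 2 ≤ Nn χ δ φ d x ∧ Nn χ δ φ d x ≤ C0 * δ * d 0 ^ 2 :=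
    fun x hx => II1 x (k1.trans hx.1) (hx.2.trans k0)
  have hgb : ∀ x ∈ Icc (1:ℝ) 2, φ x ^ 2 / gw χ δ x ≤ b / V * (pt χ x * φ x ^ 2) := by
    intro x hx
    have hx0 : 0 < x := by linarith [hx.1]
    have hg := gw_pos χ δ x
    have e1 : gw χ δ x ≤ V * b := by
      rw [gw, hV, hb, Real.rpow_def_of_pos hδ, ← Real.exp_add]
      apply Real.exp_le_exp.2
      have := Real.log_nonneg hx.1
      have : 0 ≤ χ / 2 * Real.log x := by positivity
      nlinarith [hx.1, hx.2]
    have e2 : δ ^ (χ + 2) = V ^ 2 := by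
      rw [hV, ← Real.rpow_natCast, ← Real.rpow_mul hδ.le]; congr 1; push_cast; ring
    rw [pt_eq hδ hx0, e2]
    have e3 : b / V * (V ^ 2 / gw χ δ x ^ 2 * φ x ^ 2) = φ x ^ 2 / gw χ δ x * ((V * b) / gw χ δ x) := by
      field_simp
    rw [e3]
    apply le_mul_of_one_le_right (by positivity)
    rw [le_div_iff₀ hg]; linarith
  set Q : ℝ → ℝ := fun x => 2 * b / V * (∫ z in (1:ℝ)..x, pt χ z * φ z ^ 2)
    + gw χ δ x * (φ x * d x) - c0 * δ * d 0 ^ 2 * (3 / 4) * x with hQ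
  have hQd : ∀ x ∈ Icc (1:ℝ) 2, HasDerivAt Q (2 * b / V * (pt χ x * φ x ^ 2)
      + (gw χ δ x * (x - χ / (2 * x)) * (φ x * d x) + gw χ δ x * (d x * d x + φ x * ((κ - 1 / gw χ δ x ^ 2) * φ x)))
      - c0 * δ * d 0 ^ 2 * (3 / 4)) x := by
    intro x hx
    have hx0 : 0 < x := by linarith [hx.1]
    have d1 := S.hd x
    rw [gw_sq hδ hx0] at d1
    have i1 : HasDerivAt (fun x => ∫ z in (1:ℝ)..x, pt χ z * φ z ^ 2) (pt χ x * φ x ^ 2) x :=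
      hpc.integral_hasStrictDerivAt 1 x |>.hasDerivAt
    have := ((i1.const_mul (2 * b / V)).add ((gw_deriv (χ := χ) (δ := δ) hx0).mul ((S.hφ x).mul d1))).sub
      ((hasDerivAt_id x).const_mul (c0 * δ * d 0 ^ 2 * (3 / 4)))
    refine this.congr_deriv ?_
    simp only [mul_one, Pi.mul_apply]
  have hmono : MonotoneOn Q (Icc 1 2) := by
    apply monotoneOn_of_hasDerivWithinAt_nonneg (convex_Icc 1 2) (f' := fun x => 2 * b / V * (pt χ x * φ x ^ 2)
      + (gw χ δ x * (x - χ / (2 * x)) * (φ x * d x) + gw χ δ x * (d x * d x + φ x * ((κ - 1 / gw χ δ x ^ 2) * φ x)))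
      - c0 * δ * d 0 ^ 2 * (3 / 4))
    · exact fun x hx => (hQd x hx).continuousAt.continuousWithinAt
    · intro x hx
      exact (hQd x (interior_subset hx)).hasDerivWithinAt
    · intro x hx
      have hx := interior_subset hx
      have hx0 : 0 < x := by linarith [hx.1]
      have hg := gw_pos χ δ x
      obtain ⟨n1, n2⟩ := hN x hx
      have n0 := Nn_nonneg χ δ φ d x
      have hgl := hgl x hx
      have e1 := hgb x hx
      have e2 : gw χ δ x * (d x * d x + φ x * ((κ - 1 / gw χ δ x ^ 2) * φ x))
        = Nn χ δ φ d x - 2 * (φ x ^ 2 / gw χ δ x) + κ * gw χ δ x * φ x ^ 2 := by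
        unfold Nn; field_simp; ring
      have e3 : |gw χ δ x * (x - χ / (2 * x)) * (φ x * d x)| ≤ q * (2 + χ / 2) * (Nn χ δ φ d x / 2) := by
        have a1 : χ / (2 * x) ≤ χ / 2 := by
          apply div_le_div_of_nonneg_left hχ (by norm_num); linarith [hx.1]
        have a2 : |x - χ / (2 * x)| ≤ 2 + χ / 2 := by
          have : 0 ≤ χ / (2 * x) := by positivity
          rw [abs_le]; constructor <;> linarith [hx.2]
        rw [abs_mul, abs_mul, abs_of_pos hg]
        exact mul_le_mul (mul_le_mul hgl a2 (abs_nonneg _) hqp.le) (phid_le χ δ φ d x) (abs_nonneg _) (by positivity)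
      have e4 : q * (2 + χ / 2) * (Nn χ δ φ d x / 2) ≤ c0 * δ * d 0 ^ 2 / 4 := by
        calc q * (2 + χ / 2) * (Nn χ δ φ d x / 2) ≤ q * (2 + χ / 2) * (C0 * δ * d 0 ^ 2) := by
              gcongr; linarith
          _ ≤ q * (1 + (2 + χ / 2) + κ) * (C0 * δ * d 0 ^ 2) := by
              have h22 : (2 + χ / 2) ≤ 1 + (2 + χ / 2) + κ := by linarith
              exact mul_le_mul_of_nonneg_right (mul_le_mul_of_nonneg_left h22 hqp.le) (by positivity)
          _ = (q * M) * (δ * d 0 ^ 2) := by rw [hM]; ring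
          _ ≤ (c0 / 4) * (δ * d 0 ^ 2) := by gcongr
          _ = _ := by ring
      have e5 : 0 ≤ κ * gw χ δ x * φ x ^ 2 := by positivity
      have e6 := neg_le_of_abs_le e3
      have e7 : 2 * b / V * (pt χ x * φ x ^ 2) = 2 * (b / V * (pt χ x * φ x ^ 2)) := by ring
      rw [e2, e7]
      linarith
  have hfin := hmono (left_mem_Icc.2 (by norm_num)) (right_mem_Icc.2 (by norm_num)) (by norm_num : (1:ℝ) ≤ 2)
  simp only [hQ, intervalIntegral.integral_same, mul_zero, zero_add] at hfin
  have hbd : ∀ x ∈ Icc (1:ℝ) 2, |gw χ δ x * (φ x * d x)| ≤ c0 * δ * d 0 ^ 2 / 8 := by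
    intro x hx
    obtain ⟨n1, n2⟩ := hN x hx
    have n0 := Nn_nonneg χ δ φ d x
    have hg := gw_pos χ δ x
    rw [abs_mul, abs_of_pos hg]
    calc gw χ δ x * |φ x * d x| ≤ q * (Nn χ δ φ d x / 2) :=
          mul_le_mul (hgl x hx) (phid_le χ δ φ d x) (abs_nonneg _) hqp.le
      _ ≤ q * (C0 * δ * d 0 ^ 2 / 2) := by gcongr
      _ = q * (1 * C0) * (δ * d 0 ^ 2) / 2 := by ring
      _ ≤ (q * M) * (δ * d 0 ^ 2) / 2 := by rw [hM]; gcongr; linarith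
      _ ≤ (c0 / 4) * (δ * d 0 ^ 2) / 2 := by gcongr
      _ = _ := by ring
  have b1 := abs_le.1 (hbd 1 (left_mem_Icc.2 (by norm_num)))
  have b2 := abs_le.1 (hbd 2 (right_mem_Icc.2 (by norm_num)))
  have hI : ∫ z in (1:ℝ)..2, pt χ z * φ z ^ 2 ≤ ∫ x in Ioi (0:ℝ), pt χ x * φ x ^ 2 := by
    rw [intervalIntegral.integral_of_le (by norm_num)]
    apply setIntegral_mono_set hint
    · exact Eventually.of_forall fun x => mul_nonneg (pt_nonneg _ _) (sq_nonneg _)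
    · have hsub : Ioc (1:ℝ) 2 ⊆ Ioi 0 := fun x hx => lt_trans one_pos hx.1
      exact hsub.eventuallyLE
  have h9 : c0 * δ * d 0 ^ 2 / 2 ≤ 2 * b / V * ∫ z in (1:ℝ)..2, pt χ z * φ z ^ 2 := by linarith
  refine le_trans ?_ hI
  rw [Real.rpow_add_one hδ.ne', ← hV]
  rw [div_mul_eq_mul_div, le_div_iff₀ hVp] at h9
  rw [div_mul_eq_mul_div, div_mul_eq_mul_div, div_le_iff₀ (by positivity)]
  nlinarith



/-- the weight function -/
theorem w_exists {α ν : ℝ} (hα : 0 < α) (hν : 0 < ν) (hγ : α + ν < 1) :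
    ∃ w w' : ℝ → ℝ, (∀ v, 0 < v → HasDerivAt w (w' v) v) ∧
      (∀ v, 0 < v → 0 < w v ∧ w v ≤ v ^ (α - 1)) ∧ IntegrableOn w (Ioi 0) ∧
      (∀ v, 0 < v → v ^ 2 * w' v + (1 + ν) * v * w v + w v = v ^ (α - 1)) := by
  set γ := α + ν with hγd
  have hγ0 : 0 < γ := by positivity
  set g : ℝ → ℝ := fun r => Real.exp (-r) * r ^ (-γ) with hg
  have hgi : IntegrableOn g (Ioi 0) := by
    have := Real.GammaIntegral_convergent (s := 1 - γ) (by linarith)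
    have e : (1 - γ - 1) = -γ := by ring
    rw [e] at this; exact this
  have hgpos : ∀ r, 0 < r → 0 < g r := fun r hr => by simp only [hg]; positivity
  have hgc : ∀ r, 0 < r → ContinuousAt g r := fun r hr => by
    simp only [hg]
    exact (Real.continuous_exp.comp continuous_neg).continuousAt.mul (Real.continuousAt_rpow_const _ _ (Or.inl hr.ne'))
  set A := ∫ r in Ioi 0, g r with hA
  set H : ℝ → ℝ := fun x => A - ∫ r in (0:ℝ)..x, g r with hH
  have hHe : ∀ x, 0 < x → H x = ∫ r in Ioi x, g r := by
    intro x hx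
    have h1 : ∫ r in Ioi 0, g r = (∫ r in Ioc 0 x, g r) + ∫ r in Ioi x, g r := by
      rw [← setIntegral_union (Ioc_disjoint_Ioi le_rfl) measurableSet_Ioi
        (hgi.mono_set Ioc_subset_Ioi_self) (hgi.mono_set (Ioi_subset_Ioi hx.le)), Ioc_union_Ioi_eq_Ioi hx.le]
    simp only [hH, hA]
    rw [h1, intervalIntegral.integral_of_le hx.le]; ring
  have hHd : ∀ x, 0 < x → HasDerivAt H (-(Real.exp (-x) * x ^ (-γ))) x := by
    intro x hx
    have hii : IntervalIntegrable g volume 0 x := by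
      rw [intervalIntegrable_iff_integrableOn_Ioc_of_le hx.le]; exact hgi.mono_set Ioc_subset_Ioi_self
    have hm : StronglyMeasurableAtFilter g (𝓝 x) := by
      refine ⟨Ioi 0, Ioi_mem_nhds hx, hgi.aestronglyMeasurable⟩
    exact (intervalIntegral.integral_hasDerivAt_right hii hm (hgc x hx)).const_sub A
  have hHpos : ∀ x, 0 < x → 0 < H x := by
    intro x hx
    rw [hHe x hx]
    rw [setIntegral_pos_iff_support_of_nonneg_ae]
    · have : Function.support g ∩ Ioi x = Ioi x := by
        apply inter_eq_right.2
        intro r hr; exact (hgpos r (hx.trans hr)).ne'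
      rw [this]; simp
    · filter_upwards [ae_restrict_mem measurableSet_Ioi] with r hr
      exact (hgpos r (hx.trans hr)).le
    · exact hgi.mono_set (Ioi_subset_Ioi hx.le)
  have hHle : ∀ x, 0 < x → H x ≤ x ^ (-γ) * Real.exp (-x) := by
    intro x hx
    rw [hHe x hx, ← integral_exp_neg_Ioi x, ← integral_const_mul]
    apply setIntegral_mono_on (hgi.mono_set (Ioi_subset_Ioi hx.le)) ((integrableOn_exp_neg_Ioi x).const_mul _) measurableSet_Ioi
    intro r hr
    simp only [hg]
    rw [mul_comm]
    gcongr ?_ * _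
    exact Real.rpow_le_rpow_of_nonpos hx (le_of_lt hr) (by linarith)
  have hHA : ∀ x, 0 < x → H x ≤ A := by
    intro x hx
    simp only [hH]
    have : 0 ≤ ∫ r in (0:ℝ)..x, g r := by
      apply intervalIntegral.integral_nonneg hx.le
      intro u hu; simp only [hg]; have := hu.1; positivity
    linarith
  set w : ℝ → ℝ := fun v => v ^ (-1 - ν) * (Real.exp (v⁻¹) * H (v⁻¹)) with hw
  set w' : ℝ → ℝ := fun v => (v ^ (α - 1) - (1 + ν) * v * w v - w v) / v ^ 2 with hw'
  have hwd : ∀ v, 0 < v → HasDerivAt w (w' v) v := by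
    intro v hv
    have hi := hasDerivAt_inv hv.ne'
    have h1 := (Real.hasDerivAt_rpow_const (x := v) (p := -1 - ν) (Or.inl hv.ne'))
    have h2 := hi.exp
    have h3 := (hHd v⁻¹ (by positivity)).comp v hi
    have := h1.mul (h2.mul h3)
    refine this.congr_deriv ?_
    simp only [hw', hw, Function.comp]
    have r1 : v ^ (-1 - ν - 1) = v ^ (-1 - ν) / v := by rw [Real.rpow_sub_one hv.ne']
    have r2 : (v⁻¹) ^ (-γ) = v ^ γ := by rw [Real.inv_rpow hv.le, Real.rpow_neg hv.le, inv_inv]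
    have r3 : v ^ (α - 1) = v ^ (-1 - ν) * v ^ γ := by
      rw [← Real.rpow_add hv]; congr 1; rw [hγd]; ring
    rw [r1, r2, r3, Real.exp_neg]
    simp only [Pi.mul_apply, Function.comp]
    field_simp
    ring
  have hwb : ∀ v, 0 < v → 0 < w v ∧ w v ≤ v ^ (α - 1) := by
    intro v hv
    have hv' : 0 < v⁻¹ := by positivity
    refine ⟨by simp only [hw]; have := hHpos _ hv'; positivity, ?_⟩
    have r2 : (v⁻¹) ^ (-γ) = v ^ γ := by rw [Real.inv_rpow hv.le, Real.rpow_neg hv.le, inv_inv]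
    have r3 : v ^ (α - 1) = v ^ (-1 - ν) * v ^ γ := by
      rw [← Real.rpow_add hv]; congr 1; rw [hγd]; ring
    have := hHle _ hv'
    rw [r2] at this
    rw [r3]
    simp only [hw]
    gcongr
    calc Real.exp v⁻¹ * H v⁻¹ ≤ Real.exp v⁻¹ * (v ^ γ * Real.exp (-v⁻¹)) := by gcongr
      _ = v ^ γ := by rw [Real.exp_neg]; field_simp
  have hwc : ContinuousOn w (Ioi 0) := fun v hv => (hwd v hv).continuousAt.continuousWithinAt
  refine ⟨w, w', hwd, hwb, ?_, ?_⟩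
  · have hu : Ioi (0:ℝ) = Ioc 0 1 ∪ Ioi 1 := (Ioc_union_Ioi_eq_Ioi zero_le_one).symm
    rw [hu]
    apply IntegrableOn.union
    · have hi : IntegrableOn (fun v : ℝ => v ^ (α - 1)) (Ioc 0 1) := by
        rw [← intervalIntegrable_iff_integrableOn_Ioc_of_le zero_le_one]
        exact intervalIntegral.intervalIntegrable_rpow' (by linarith)
      apply Integrable.mono' hi ((hwc.mono Ioc_subset_Ioi_self).aestronglyMeasurable measurableSet_Ioc)
      filter_upwards [ae_restrict_mem measurableSet_Ioc] with v hv
      rw [Real.norm_eq_abs, abs_of_pos (hwb v hv.1).1]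
      exact (hwb v hv.1).2
    · have hi : IntegrableOn (fun v : ℝ => v ^ (-1 - ν) * (Real.exp 1 * A)) (Ioi 1) := by
        exact (integrableOn_Ioi_rpow_of_lt (by linarith) one_pos).mul_const _
      apply Integrable.mono' hi ((hwc.mono (Ioi_subset_Ioi zero_le_one)).aestronglyMeasurable measurableSet_Ioi)
      filter_upwards [ae_restrict_mem measurableSet_Ioi] with v hv
      have hv1 : (1:ℝ) < v := hv
      have hv0 : 0 < v := by linarith
      rw [Real.norm_eq_abs, abs_of_pos (hwb v hv0).1]
      simp only [hw]
      have hv' : 0 < v⁻¹ := by positivity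
      have := hHA _ hv'
      have h0 := hHpos _ hv'
      gcongr
      exact (inv_le_one_of_one_le₀ hv1.le)
  · intro v hv
    simp only [hw']
    field_simp
    ring


theorem pow_exp_le (m : ℕ) {x : ℝ} (hx : 0 ≤ x) : x ^ m * Real.exp (-x) ≤ m.factorial := by
  have h := Real.pow_div_factorial_le_exp x hx m
  have hf : (0:ℝ) < m.factorial := by positivity
  rw [div_le_iff₀ hf] at h
  rw [Real.exp_neg, ← div_eq_mul_inv, div_le_iff₀ (Real.exp_pos _)]
  linarith

/-- moments of the Laplace transform -/
noncomputable def Mk (w : ℝ → ℝ) (k : ℕ) (Y : ℝ) : ℝ := ∫ v in Ioi (0:ℝ), v ^ k * Real.exp (-(Y * v)) * w v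

theorem Mk_meas {w : ℝ → ℝ} (hw : IntegrableOn w (Ioi 0)) (k : ℕ) (Y : ℝ) :
    AEStronglyMeasurable (fun v => v ^ k * Real.exp (-(Y * v)) * w v) (volume.restrict (Ioi 0)) := by
  apply AEStronglyMeasurable.mul _ hw.aestronglyMeasurable
  apply Continuous.aestronglyMeasurable
  fun_prop

theorem Mk_bd {w : ℝ → ℝ} (k : ℕ) {Y v : ℝ} (hY : 0 < Y) (hv : 0 < v) :
    |v ^ k * Real.exp (-(Y * v)) * w v| ≤ k.factorial / Y ^ k * |w v| := by
  rw [abs_mul]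
  gcongr
  rw [abs_of_nonneg (by positivity), le_div_iff₀ (by positivity)]
  calc v ^ k * Real.exp (-(Y * v)) * Y ^ k = (Y * v) ^ k * Real.exp (-(Y * v)) := by rw [mul_pow]; ring
    _ ≤ _ := pow_exp_le k (by positivity)

theorem Mk_int {w : ℝ → ℝ} (hw : IntegrableOn w (Ioi 0)) (k : ℕ) {Y : ℝ} (hY : 0 < Y) :
    IntegrableOn (fun v => v ^ k * Real.exp (-(Y * v)) * w v) (Ioi 0) := by
  apply Integrable.mono' (hw.abs.const_mul (k.factorial / Y ^ k)) (Mk_meas hw k Y)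
  filter_upwards [ae_restrict_mem measurableSet_Ioi] with v hv
  exact Mk_bd k hY hv

theorem Mk_abs_le {w : ℝ → ℝ} (hw : IntegrableOn w (Ioi 0)) (k : ℕ) {Y : ℝ} (hY : 0 < Y) :
    |Y ^ k * Mk w k Y| ≤ k.factorial * ∫ v in Ioi (0:ℝ), |w v| := by
  have h : |Mk w k Y| ≤ k.factorial / Y ^ k * ∫ v in Ioi (0:ℝ), |w v| := by
    rw [← integral_const_mul, ← Real.norm_eq_abs]
    apply norm_integral_le_of_norm_le (hw.abs.const_mul (k.factorial / Y ^ k))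
    filter_upwards [ae_restrict_mem measurableSet_Ioi] with v hv
    exact Mk_bd k hY hv
  rw [abs_mul, abs_of_pos (by positivity)]
  calc Y ^ k * |Mk w k Y| ≤ Y ^ k * (k.factorial / Y ^ k * ∫ v in Ioi (0:ℝ), |w v|) := by gcongr
    _ = _ := by field_simp

theorem Mk_deriv {w : ℝ → ℝ} (hw : IntegrableOn w (Ioi 0)) (k : ℕ) {Y : ℝ} (hY : 0 < Y) :
    HasDerivAt (Mk w k) (-Mk w (k + 1) Y) Y := by
  have := (hasDerivAt_integral_of_dominated_loc_of_deriv_le (μ := volume.restrict (Ioi (0:ℝ)))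
    (F := fun Y v => v ^ k * Real.exp (-(Y * v)) * w v)
    (F' := fun Y v => -(v ^ (k + 1) * Real.exp (-(Y * v)) * w v))
    (bound := fun v => (k + 1).factorial / (Y / 2) ^ (k + 1) * |w v|) (s := Ioi (Y / 2)) (x₀ := Y)
    (Ioi_mem_nhds (by linarith)) (Eventually.of_forall fun y => Mk_meas hw k y) (Mk_int hw k hY)
    (Mk_meas hw (k + 1) Y).neg ?_ (hw.abs.const_mul _) ?_).2
  · rw [integral_neg] at this
    exact this
  · filter_upwards [ae_restrict_mem measurableSet_Ioi] with v hv y hy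
    have hy' : Y / 2 < y := hy
    have hv' : 0 < v := hv
    have hY2 : 0 < Y / 2 := by linarith
    rw [norm_neg]
    refine (Mk_bd (k + 1) (by linarith) hv).trans ?_
    gcongr
  · filter_upwards with v y hy
    have h1 : HasDerivAt (fun y : ℝ => -(y * v)) (-v) y := by
      exact (((hasDerivAt_id y).mul_const v).neg).congr_deriv (by ring)
    have := ((h1.exp).const_mul (v ^ k)).mul_const (w v)
    refine this.congr_deriv ?_
    ring

theorem Mk_lim0 {w : ℝ → ℝ} (hw : IntegrableOn w (Ioi 0)) (k : ℕ) :
    Tendsto (fun Y => Y ^ k * Mk w k Y) (𝓝[>] 0) (𝓝 (∫ v in Ioi (0:ℝ), 0 ^ k * w v)) := by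
  have := tendsto_integral_filter_of_dominated_convergence (μ := volume.restrict (Ioi (0:ℝ)))
    (F := fun Y v => Y ^ k * (v ^ k * Real.exp (-(Y * v)) * w v)) (f := fun v => 0 ^ k * w v)
    (l := 𝓝[>] (0:ℝ)) (fun v => k.factorial * |w v|)
    (Eventually.of_forall fun y => (Mk_meas hw k y).const_mul _) ?_ (hw.abs.const_mul _) ?_
  · refine this.congr fun Y => ?_
    rw [integral_const_mul]; rfl
  · filter_upwards [self_mem_nhdsWithin] with Y hY
    have hY' : 0 < Y := hY
    filter_upwards [ae_restrict_mem measurableSet_Ioi] with v hv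
    rw [norm_mul, Real.norm_eq_abs, Real.norm_eq_abs, abs_of_pos (by positivity : 0 < Y ^ k)]
    calc _ ≤ Y ^ k * (k.factorial / Y ^ k * |w v|) := by gcongr; exact Mk_bd k hY' hv
      _ = _ := by field_simp
  · filter_upwards with v
    have hc : Continuous (fun Y : ℝ => Y ^ k * (v ^ k * Real.exp (-(Y * v)) * w v)) := by fun_prop
    have h := (hc.tendsto 0).mono_left (nhdsWithin_le_nhds (s := Ioi (0:ℝ)))
    convert h using 2
    rcases k with _ | k
    · simp
    · simp

theorem Mk_ode {α ν : ℝ} (hα : 0 < α) (hα1 : α < 1) {w w' : ℝ → ℝ}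
    (hwd : ∀ v, 0 < v → HasDerivAt w (w' v) v)
    (hwb : ∀ v, 0 < v → 0 < w v ∧ w v ≤ v ^ (α - 1)) (hw : IntegrableOn w (Ioi 0))
    (hwe : ∀ v, 0 < v → v ^ 2 * w' v + (1 + ν) * v * w v + w v = v ^ (α - 1)) {Y : ℝ} (hY : 0 < Y) :
    Y * Mk w 2 Y - (1 - ν) * Mk w 1 Y + Mk w 0 Y = Real.Gamma α * Y ^ (-α) := by
  have hI1 : IntegrableOn (fun v : ℝ => v ^ (α - 1) * Real.exp (-(Y * v))) (Ioi 0) := by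
    have hg := Real.integral_rpow_mul_exp_neg_mul_Ioi hα hY
    by_contra hc
    rw [integral_undef hc] at hg
    have : 0 < (1 / Y) ^ α * Real.Gamma α := mul_pos (by positivity) (Real.Gamma_pos_of_pos hα)
    linarith
  have key := integral_Ioi_of_hasDerivAt_of_tendsto (a := 0) (m := 0)
    (f := fun v => v ^ 2 * Real.exp (-(Y * v)) * w v)
    (f' := fun v => -Y * (v ^ 2 * Real.exp (-(Y * v)) * w v) + (1 - ν) * (v ^ 1 * Real.exp (-(Y * v)) * w v)
      - (v ^ 0 * Real.exp (-(Y * v)) * w v) + v ^ (α - 1) * Real.exp (-(Y * v))) ?_ ?_ ?_ ?_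
  · rw [integral_add _ hI1, integral_sub _ (Mk_int hw 0 hY), integral_add ((Mk_int hw 2 hY).const_mul _) ((Mk_int hw 1 hY).const_mul _),
      integral_const_mul, integral_const_mul, Real.integral_rpow_mul_exp_neg_mul_Ioi hα hY] at key
    · change -Y * Mk w 2 Y + (1 - ν) * Mk w 1 Y - Mk w 0 Y + _ = _ at key
      have e : (1 / Y) ^ α = Y ^ (-α) := by rw [one_div, Real.inv_rpow hY.le, Real.rpow_neg hY.le]
      rw [e] at key
      simp at key
      linarith
    · exact ((Mk_int hw 2 hY).const_mul _).add ((Mk_int hw 1 hY).const_mul _)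
    · exact (((Mk_int hw 2 hY).const_mul _).add ((Mk_int hw 1 hY).const_mul _)).sub (Mk_int hw 0 hY)
  · rw [← continuousWithinAt_Ioi_iff_Ici]
    unfold ContinuousWithinAt
    simp only [ne_eq, OfNat.ofNat_ne_zero, not_false_eq_true, zero_pow, zero_mul]
    have hlim : Tendsto (fun v : ℝ => v ^ (α + 1)) (𝓝[>] 0) (𝓝 0) := by
      have := (Real.continuousAt_rpow_const 0 (α + 1) (Or.inr (by linarith))).tendsto.mono_left (nhdsWithin_le_nhds (s := Ioi (0:ℝ)))
      rwa [Real.zero_rpow (by linarith)] at this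
    refine squeeze_zero' ?_ ?_ hlim
    · filter_upwards [self_mem_nhdsWithin] with v hv
      have := (hwb v hv).1; positivity
    · filter_upwards [self_mem_nhdsWithin] with v hv
      have hv' : 0 < v := hv
      obtain ⟨h1, h2⟩ := hwb v hv
      have h3 : Real.exp (-(Y * v)) ≤ 1 := Real.exp_le_one_iff.2 (by have := mul_pos hY hv'; linarith)
      calc v ^ 2 * Real.exp (-(Y * v)) * w v ≤ v ^ 2 * 1 * v ^ (α - 1) := by gcongr
        _ = v ^ (α + 1) := by
          rw [mul_one, ← Real.rpow_natCast, ← Real.rpow_add hv']; congr 1; push_cast; ring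
  · intro v hv
    have hv' : 0 < v := hv
    have h1 : HasDerivAt (fun v : ℝ => -(Y * v)) (-Y) v := by
      exact (((hasDerivAt_id v).const_mul Y).neg).congr_deriv (by ring)
    have := ((hasDerivAt_pow 2 v).mul h1.exp).mul (hwd v hv')
    refine this.congr_deriv ?_
    rw [← hwe v hv']
    simp only [Pi.mul_apply]
    push_cast
    ring
  · exact ((((Mk_int hw 2 hY).const_mul _).add ((Mk_int hw 1 hY).const_mul _)).sub (Mk_int hw 0 hY)).add hI1
  · have hlim : Tendsto (fun v : ℝ => v ^ 2 * Real.exp (-(Y * v))) atTop (𝓝 0) := by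
      have h := (Real.tendsto_pow_mul_exp_neg_atTop_nhds_zero 2).comp (tendsto_id.const_mul_atTop hY)
      have h2 := h.const_mul (1 / Y ^ 2)
      rw [mul_zero] at h2
      refine h2.congr fun v => ?_
      simp only [Function.comp, id]; field_simp
    refine squeeze_zero' ?_ ?_ hlim
    · filter_upwards [eventually_gt_atTop 0] with v hv
      have := (hwb v hv).1; positivity
    · filter_upwards [eventually_ge_atTop 1] with v hv
      have hv' : 0 < v := by linarith
      obtain ⟨h1, h2⟩ := hwb v hv'
      have h4 : v ^ (α - 1) ≤ 1 := Real.rpow_le_one_of_one_le_of_nonpos hv (by linarith)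
      calc v ^ 2 * Real.exp (-(Y * v)) * w v ≤ v ^ 2 * Real.exp (-(Y * v)) * 1 := by gcongr; linarith
        _ = _ := by ring


/-- the comparison function -/
structure PsiFn (χ ξ Ψ0 C : ℝ) (Ψ Ψ' : ℝ → ℝ) : Prop where
  hd : ∀ t, 0 < t → HasDerivAt Ψ (Ψ' t) t
  hdd : ∀ t, 0 < t → HasDerivAt Ψ' (t ^ χ * (t ^ (-ξ) - Ψ t)) t
  l0 : Tendsto Ψ (𝓝[>] 0) (𝓝 Ψ0)
  bd : ∀ t, 0 < t → |Ψ t| ≤ C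
  bd' : ∀ t, 0 < t → |t * Ψ' t| ≤ C
  l0' : Tendsto (fun t => t * Ψ' t) (𝓝[>] 0) (𝓝 0)
  bdd : ∀ t, 0 < t → t ^ (χ + 2) * |t ^ (-ξ) - Ψ t| ≤ C

theorem Psi_exists {χ ξ : ℝ} (hχ : 0 ≤ χ) (hξ0 : 0 ≤ ξ) (hξ : ξ < (χ + 1) / 2) :
    ∃ Ψ0 C : ℝ, ∃ Ψ Ψ' : ℝ → ℝ, 0 < Ψ0 ∧ 0 < C ∧ PsiFn χ ξ Ψ0 C Ψ Ψ' := by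
  rcases hξ0.eq_or_lt with rfl | hξp
  · refine ⟨1, 1, fun _ => 1, fun _ => 0, one_pos, one_pos, ?_, ?_, ?_, ?_, ?_, ?_, ?_⟩
    · intro t _; exact hasDerivAt_const _ _
    · intro t _; simpa using hasDerivAt_const t (0:ℝ)
    · exact tendsto_const_nhds
    · intro t _; simp
    · intro t _; simp
    · simp
    · intro t _; simp
  set n := χ + 2 with hn
  have hn0 : 0 < n := by linarith
  set ν := 1 / n with hν
  have hν0 : 0 < ν := by positivity
  set α := ξ / n with hα
  have hα0 : 0 < α := by positivity
  have hγ : α + ν < 1 := by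
    rw [hα, hν, ← add_div, div_lt_one hn0]; linarith
  obtain ⟨w, w', hwd, hwb, hw, hwe⟩ := w_exists hα0 hν0 hγ
  have hode := fun Y (hY : 0 < Y) => Mk_ode hα0 (by linarith) hwd hwb hw hwe (Y := Y) hY
  set K := 1 / (Real.Gamma α * (n ^ 2) ^ α) with hK
  have hGa := Real.Gamma_pos_of_pos hα0
  have hK0 : 0 < K := by positivity
  set W := ∫ v in Ioi (0:ℝ), |w v| with hW
  have hWe : ∫ v in Ioi (0:ℝ), w v = W := by
    apply setIntegral_congr_fun measurableSet_Ioi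
    intro v hv; exact (abs_of_pos (hwb v hv).1).symm
  have hWp : 0 < ∫ v in Ioi (0:ℝ), w v := by
    rw [setIntegral_pos_iff_support_of_nonneg_ae]
    · have : Function.support w ∩ Ioi 0 = Ioi 0 := by
        apply inter_eq_right.2
        intro r hr; exact ((hwb r hr).1).ne'
      rw [this]; simp
    · filter_upwards [ae_restrict_mem measurableSet_Ioi] with r hr
      exact (hwb r hr).1.le
    · exact hw
  have hW0 : 0 < W := hWe ▸ hWp
  set Yf : ℝ → ℝ := fun t => t ^ n / n ^ 2 with hYf
  have hYp : ∀ t, 0 < t → 0 < Yf t := fun t ht => by simp only [hYf]; positivity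
  have hYd : ∀ t, 0 < t → HasDerivAt Yf (t ^ (n - 1) / n) t := by
    intro t ht
    refine ((Real.hasDerivAt_rpow_const (x := t) (p := n) (Or.inl ht.ne')).div_const (n ^ 2)).congr_deriv ?_
    field_simp
  have hY0 : Tendsto Yf (𝓝[>] 0) (𝓝[>] 0) := by
    apply tendsto_nhdsWithin_iff.2 ⟨?_, ?_⟩
    · have := ((Real.continuousAt_rpow_const 0 n (Or.inr hn0.le)).tendsto.mono_left (nhdsWithin_le_nhds (s := Ioi (0:ℝ)))).div_const (n ^ 2)
      rwa [Real.zero_rpow hn0.ne', zero_div] at this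
    · filter_upwards [self_mem_nhdsWithin] with t ht using hYp t ht
  have hYt : ∀ t, 0 < t → t ^ n = n ^ 2 * Yf t := fun t ht => by simp only [hYf]; field_simp
  have hpar : ∀ t, 0 < t → K * (Real.Gamma α * Yf t ^ (-α)) = t ^ (-ξ) := by
    intro t ht
    have e1 : Yf t ^ (-α) = t ^ (-ξ) * (n ^ 2) ^ α := by
      simp only [hYf]
      rw [Real.div_rpow (by positivity) (by positivity), ← Real.rpow_mul ht.le, Real.rpow_neg (by positivity : 0 ≤ n ^ 2), div_inv_eq_mul]
      congr 2; rw [hα]; field_simp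
    rw [e1, hK]
    have : 0 < (n ^ 2) ^ α := by positivity
    field_simp
  have hdiff : ∀ t, 0 < t → t ^ (-ξ) - K * Mk w 0 (Yf t) = K * (Yf t * Mk w 2 (Yf t) - (1 - ν) * Mk w 1 (Yf t)) := by
    intro t ht
    rw [← hpar t ht, ← hode _ (hYp t ht)]; ring
  have hν1 : ν < 1 := by linarith
  refine ⟨K * W, K * W * (1 + n + 3 * n ^ 2), fun t => K * Mk w 0 (Yf t), fun t => -(K * (Mk w 1 (Yf t) * (t ^ (n - 1) / n))),
    by positivity, by positivity, ?_, ?_, ?_, ?_, ?_, ?_, ?_⟩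
  · intro t ht
    have := (((Mk_deriv hw 0 (hYp t ht)).comp t (hYd t ht)).const_mul K)
    refine this.congr_deriv ?_
    simp only [zero_add]; ring
  · intro t ht
    have h1 := (Mk_deriv hw 1 (hYp t ht)).comp t (hYd t ht)
    have h2 := (Real.hasDerivAt_rpow_const (x := t) (p := n - 1) (Or.inl ht.ne')).div_const n
    have := ((h1.mul h2).const_mul K).neg
    refine this.congr_deriv ?_
    rw [hdiff t ht]
    simp only [Function.comp, hYf]
    have r1 : t ^ (n - 1 - 1) = t ^ χ := by congr 1; rw [hn]; ring
    have r2 : t ^ (n - 1) = t ^ χ * t := by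
      rw [← Real.rpow_add_one ht.ne']; congr 1; rw [hn]; ring
    have r3 : t ^ n = t ^ χ * t * t := by
      rw [← Real.rpow_add_one ht.ne', ← Real.rpow_add_one ht.ne']; congr 1; rw [hn]; ring
    rw [r1, r2, hν]
    generalize Mk w 1 (t ^ n / n ^ 2) = m1
    generalize Mk w (1 + 1) (t ^ n / n ^ 2) = m2
    rw [r3]
    field_simp
    ring
  · have := ((Mk_lim0 hw 0).comp hY0).const_mul K
    simp only [pow_zero, one_mul, hWe] at this
    exact this
  · intro t ht
    have := Mk_abs_le hw 0 (hYp t ht)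
    simp only [pow_zero, one_mul, Nat.factorial_zero, Nat.cast_one] at this
    rw [abs_mul, abs_of_pos hK0]
    calc _ ≤ K * W := by gcongr
      _ ≤ _ := by
        have : 0 ≤ n + 3 * n ^ 2 := by positivity
        nlinarith [mul_pos hK0 hW0]
  · intro t ht
    have := Mk_abs_le hw 1 (hYp t ht)
    simp only [pow_one, Nat.factorial_one, Nat.cast_one, one_mul] at this
    have e : t * -(K * (Mk w 1 (Yf t) * (t ^ (n - 1) / n))) = -(K * n * (Yf t * Mk w 1 (Yf t))) := by
      have r : t * t ^ (n - 1) = n ^ 2 * Yf t := by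
        rw [← hYt t ht, mul_comm, ← Real.rpow_add_one ht.ne']; congr 1; ring
      calc _ = -(K * Mk w 1 (Yf t) * (t * t ^ (n - 1)) / n) := by ring
        _ = _ := by rw [r]; field_simp
    rw [e, abs_neg, abs_mul, abs_of_pos (by positivity)]
    calc _ ≤ K * n * W := by gcongr
      _ ≤ _ := by
        have : 0 ≤ 1 + 3 * n ^ 2 := by positivity
        nlinarith [mul_pos hK0 hW0, mul_nonneg (mul_pos hK0 hW0).le this]
  · have := (((Mk_lim0 hw 1).comp hY0).const_mul (K * n)).neg
    simp only [pow_one, zero_mul, integral_zero, mul_zero, neg_zero] at this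
    refine this.congr' ?_
    filter_upwards [self_mem_nhdsWithin] with t ht
    have ht' : 0 < t := ht
    have r : t * t ^ (n - 1) = n ^ 2 * Yf t := by
      rw [← hYt t ht, mul_comm, ← Real.rpow_add_one ht'.ne']; congr 1; ring
    symm
    calc _ = -(K * Mk w 1 (Yf t) * (t * t ^ (n - 1)) / n) := by ring
      _ = _ := by rw [r]; simp only [Function.comp]; field_simp
  · intro t ht
    have hY := hYp t ht
    have b1 := Mk_abs_le hw 1 hY
    have b2 := Mk_abs_le hw 2 hY
    simp only [pow_one, Nat.factorial_one, Nat.cast_one, one_mul] at b1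
    have f2 : ((Nat.factorial 2 : ℕ) : ℝ) = 2 := by norm_num [Nat.factorial]
    rw [f2] at b2
    change t ^ n * |t ^ (-ξ) - K * Mk w 0 (Yf t)| ≤ _
    rw [hdiff t ht, hYt t ht, ← abs_of_pos (show 0 < n ^ 2 * Yf t by positivity), ← abs_mul]
    have e : n ^ 2 * Yf t * (K * (Yf t * Mk w 2 (Yf t) - (1 - ν) * Mk w 1 (Yf t)))
      = n ^ 2 * K * (Yf t ^ 2 * Mk w 2 (Yf t) - (1 - ν) * (Yf t * Mk w 1 (Yf t))) := by ring
    rw [e, abs_mul, abs_of_pos (show 0 < n ^ 2 * K by positivity)]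
    calc _ ≤ n ^ 2 * K * (2 * W + 1 * W) := by
            gcongr
            refine (abs_sub _ _).trans ?_
            rw [abs_mul (1 - ν)]
            have : |1 - ν| ≤ 1 := by rw [abs_of_pos (by linarith)]; linarith
            gcongr
      _ ≤ _ := by
        have h1 : 0 ≤ K * W * (1 + n) := by positivity
        nlinarith


theorem Sol.phi_bdd {χ κ δ : ℝ} {φ d : ℝ → ℝ} (S : Sol χ κ δ φ d) : ∃ B, ∀ x, 0 ≤ x → |φ x| ≤ B := by
  have hc : Continuous φ := continuous_iff_continuousAt.2 fun x => (S.hφ x).continuousAt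
  have h1 := (S.tφ.abs).eventually (ge_mem_nhds (by simp : |(0:ℝ)| < 1))
  obtain ⟨T, hT⟩ := eventually_atTop.1 h1
  obtain ⟨B, hB⟩ := (isCompact_Icc (a := (0:ℝ)) (b := T)).exists_bound_of_continuousOn hc.continuousOn
  refine ⟨max B 1, fun x hx => ?_⟩
  rcases le_total x T with h | h
  · exact (hB x ⟨hx, h⟩).trans (le_max_left _ _)
  · exact (hT x h).trans (le_max_right _ _)

theorem Sol.int_target {χ ξ κ δ : ℝ} (hξ : ξ < (χ + 1) / 2) (hχ : 0 ≤ χ) {φ d : ℝ → ℝ} (S : Sol χ κ δ φ d) :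
    IntegrableOn (fun x => x ^ (χ - ξ) * Real.exp (-x ^ 2) * φ x) (Ioi 0) := by
  obtain ⟨B, hB⟩ := S.phi_bdd
  have hc : Continuous φ := continuous_iff_continuousAt.2 fun x => (S.hφ x).continuousAt
  have hi : IntegrableOn (fun x : ℝ => x ^ (χ - ξ) * Real.exp (-x ^ 2)) (Ioi 0) := by
    have := integrableOn_rpow_mul_exp_neg_mul_sq (b := 1) one_pos (s := χ - ξ) (by linarith)
    simpa using this
  refine Integrable.mul_bdd (c := B) hi hc.aestronglyMeasurable ?_
  filter_upwards [ae_restrict_mem measurableSet_Ioi] with x hx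
  exact hB x (le_of_lt hx)

set_option maxHeartbeats 1000000 in
theorem ident {χ ξ κ δ Ψ0 C : ℝ} (hχ : 0 ≤ χ) (hξ : ξ < (χ + 1) / 2) (hκ : 0 ≤ κ) (hδ : 0 < δ)
    {Ψ Ψ' φ d : ℝ → ℝ} (P : PsiFn χ ξ Ψ0 C Ψ Ψ') (S : Sol χ κ δ φ d) (hφi : IntegrableOn φ (Ioi 0)) :
    |δ ^ (ξ - (χ + 2)) * (∫ x in Ioi (0:ℝ), x ^ (χ - ξ) * Real.exp (-x ^ 2) * φ x) - Ψ0 * d 0|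
      ≤ C * (1 + κ) * ∫ x in Ioi (0:ℝ), |φ x| := by
  have hcφ : Continuous φ := continuous_iff_continuousAt.2 fun x => (S.hφ x).continuousAt
  have hcd : Continuous d := continuous_iff_continuousAt.2 fun x => (S.hd x).continuousAt
  set R : ℝ → ℝ := fun x => δ⁻¹ ^ 2 * (1 - Real.exp (-x ^ 2)) * ((x / δ) ^ χ * ((x / δ) ^ (-ξ) - Ψ (x / δ))) - κ * Ψ (x / δ) with hR
  have hRb : ∀ x, 0 < x → |R x| ≤ C * (1 + κ) := by
    intro x hx
    have ht : 0 < x / δ := by positivity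
    have h1 : |1 - Real.exp (-x ^ 2)| ≤ x ^ 2 := by
      have a1 := Real.add_one_le_exp (-x ^ 2)
      have a2 : Real.exp (-x ^ 2) ≤ 1 := Real.exp_le_one_iff.2 (by nlinarith)
      rw [abs_of_nonneg (by linarith)]; linarith
    have h2 : |δ⁻¹ ^ 2 * (1 - Real.exp (-x ^ 2)) * ((x / δ) ^ χ * ((x / δ) ^ (-ξ) - Ψ (x / δ)))| ≤ C := by
      rw [abs_mul, abs_mul, abs_mul, abs_of_pos (show 0 < δ⁻¹ ^ 2 by positivity), abs_of_pos (show 0 < (x / δ) ^ χ by positivity)]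
      calc _ ≤ δ⁻¹ ^ 2 * x ^ 2 * ((x / δ) ^ χ * |(x / δ) ^ (-ξ) - Ψ (x / δ)|) := by gcongr
        _ = (x / δ) ^ (χ + 2) * |(x / δ) ^ (-ξ) - Ψ (x / δ)| := by
          have : (x / δ) ^ (χ + 2) = (x / δ) ^ χ * (x / δ) ^ 2 := by
            rw [Real.rpow_add ht]; norm_cast
          rw [this, div_pow x δ 2]; field_simp
        _ ≤ C := P.bdd _ ht
    have h3 : |κ * Ψ (x / δ)| ≤ κ * C := by
      rw [abs_mul, abs_of_nonneg hκ]; gcongr; exact P.bd _ ht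
    calc _ ≤ _ := abs_sub _ _
      _ ≤ C + κ * C := add_le_add h2 h3
      _ = _ := by ring
  have hcΨ : ContinuousOn (fun x => Ψ (x / δ)) (Ioi 0) := by
    intro x hx
    have hx' : 0 < x := hx
    exact (ContinuousAt.comp (g := Ψ) (f := fun x => x / δ) (P.hd (x / δ) (by positivity)).continuousAt (by fun_prop)).continuousWithinAt
  have hcR : ContinuousOn R (Ioi 0) := by
    have hr : ∀ e : ℝ, ContinuousOn (fun x : ℝ => (x / δ) ^ e) (Ioi 0) := by
      intro e x hx
      have hx' : 0 < x := hx
      exact (ContinuousAt.rpow_const (by fun_prop) (Or.inl (by positivity))).continuousWithinAt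
    have he : ContinuousOn (fun x : ℝ => δ⁻¹ ^ 2 * (1 - Real.exp (-x ^ 2))) (Ioi 0) :=
      Continuous.continuousOn (by fun_prop)
    exact (he.mul ((hr χ).mul ((hr (-ξ)).sub hcΨ))).sub (hcΨ.const_smul κ)
  have hRi : IntegrableOn (fun x => R x * φ x) (Ioi 0) := by
    refine Integrable.bdd_mul (c := C * (1 + κ)) hφi (hcR.aestronglyMeasurable measurableSet_Ioi) ?_
    filter_upwards [ae_restrict_mem measurableSet_Ioi] with x hx using hRb x hx
  have hTi := S.int_target hξ hχ
  set F0 : ℝ → ℝ := fun x => Ψ' (x / δ) / δ * φ x - Ψ (x / δ) * d x with hF0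
  set F : ℝ → ℝ := Function.update F0 0 (-(Ψ0 * d 0)) with hF
  have hFF : ∀ x, x ≠ 0 → F x = F0 x := fun x hx => Function.update_of_ne hx _ _
  have key := integral_Ioi_of_hasDerivAt_of_tendsto (a := 0) (m := 0) (f := F)
    (f' := fun x => δ ^ (ξ - (χ + 2)) * (x ^ (χ - ξ) * Real.exp (-x ^ 2) * φ x) + R x * φ x) ?_ ?_ ?_ ?_
  · rw [integral_add (hTi.const_mul _) hRi, integral_const_mul] at key
    have hF00 : F 0 = -(Ψ0 * d 0) := by simp [hF]
    rw [hF00] at key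
    have e : δ ^ (ξ - (χ + 2)) * (∫ x in Ioi (0:ℝ), x ^ (χ - ξ) * Real.exp (-x ^ 2) * φ x) - Ψ0 * d 0
      = -∫ x in Ioi (0:ℝ), R x * φ x := by linarith
    rw [e, abs_neg, ← integral_const_mul, ← Real.norm_eq_abs]
    apply norm_integral_le_of_norm_le (hφi.abs.const_mul _)
    filter_upwards [ae_restrict_mem measurableSet_Ioi] with x hx
    rw [Real.norm_eq_abs, abs_mul]
    exact mul_le_mul_of_nonneg_right (hRb x hx) (abs_nonneg _)
  · rw [← continuousWithinAt_Ioi_iff_Ici]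
    unfold ContinuousWithinAt
    have hF00 : F 0 = -(Ψ0 * d 0) := by simp [hF]
    rw [hF00]
    have hxd : Tendsto (fun x : ℝ => x / δ) (𝓝[>] 0) (𝓝[>] 0) := by
      apply tendsto_nhdsWithin_iff.2 ⟨?_, ?_⟩
      · have : Continuous (fun x : ℝ => x / δ) := by fun_prop
        have := (this.tendsto 0).mono_left (nhdsWithin_le_nhds (s := Ioi (0:ℝ)))
        rwa [zero_div] at this
      · filter_upwards [self_mem_nhdsWithin] with x hx
        have hx' : 0 < x := hx
        exact mem_Ioi.2 (by positivity)
    have h1 := P.l0.comp hxd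
    have h2 := P.l0'.comp hxd
    have h3 := (S.hφ 0).tendsto_slope_zero_right
    have h4 := (hcd.tendsto 0).mono_left (nhdsWithin_le_nhds (s := Ioi (0:ℝ)))
    have h5 := (h2.mul h3).sub (h1.mul h4)
    rw [zero_mul, zero_sub] at h5
    refine h5.congr' ?_
    filter_upwards [self_mem_nhdsWithin] with x hx
    have hx' : 0 < x := hx
    rw [hFF x hx'.ne']
    simp only [hF0, Function.comp, zero_add, S.h0, sub_zero, smul_eq_mul]
    field_simp
  · intro x hx
    have hx' : 0 < x := hx
    have ht : 0 < x / δ := by positivity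
    have hev : F =ᶠ[𝓝 x] F0 := by
      filter_upwards [isOpen_ne.mem_nhds hx'.ne'] with y hy using hFF y hy
    refine HasDerivAt.congr_of_eventuallyEq ?_ hev
    have hdv : HasDerivAt (fun x : ℝ => x / δ) (1 / δ) x := (hasDerivAt_id x).div_const δ
    have g1 := (P.hdd _ ht).comp x hdv
    have g2 := (P.hd _ ht).comp x hdv
    have g := ((g1.div_const δ).mul (S.hφ x)).sub (g2.mul (S.hd x))
    refine g.congr_deriv ?_
    simp only [Function.comp, hR, abs_of_pos hx']
    have r1 : δ ^ (-(χ + 2)) * x ^ χ = δ⁻¹ ^ 2 * (x / δ) ^ χ := by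
      rw [Real.div_rpow hx'.le hδ.le, Real.rpow_neg hδ.le, Real.rpow_add hδ]
      norm_cast
      field_simp
    have r2 : δ ^ (ξ - (χ + 2)) * x ^ (χ - ξ) = δ⁻¹ ^ 2 * ((x / δ) ^ χ * (x / δ) ^ (-ξ)) := by
      rw [← Real.rpow_add ht, ← sub_eq_add_neg, Real.div_rpow hx'.le hδ.le]
      have : ξ - (χ + 2) = -(χ - ξ) - 2 := by ring
      rw [this, Real.rpow_sub hδ, Real.rpow_neg hδ.le]
      norm_cast
      field_simp
    have r1' : δ ^ (-(χ + 2)) * (x ^ χ * Real.exp (-x ^ 2)) = δ⁻¹ ^ 2 * (x / δ) ^ χ * Real.exp (-x ^ 2) := by rw [← r1]; ring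
    have r2' : δ ^ (ξ - (χ + 2)) * (x ^ (χ - ξ) * Real.exp (-x ^ 2) * φ x) = δ⁻¹ ^ 2 * ((x / δ) ^ χ * (x / δ) ^ (-ξ)) * Real.exp (-x ^ 2) * φ x := by rw [← r2]; ring
    rw [r1', r2']
    field_simp
    ring
  · exact (hTi.const_mul _).add hRi
  · have hg : Tendsto (fun x => C * |φ x| + C * |d x|) atTop (𝓝 0) := by
      have := (S.tφ.abs.const_mul C).add (S.td.abs.const_mul C)
      simpa using this
    refine squeeze_zero_norm' ?_ hg
    filter_upwards [eventually_ge_atTop 1] with x hx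
    have hx' : 0 < x := by linarith
    have ht : 0 < x / δ := by positivity
    rw [hFF x hx'.ne', Real.norm_eq_abs]
    simp only [hF0]
    have b1 := P.bd' _ ht
    have hC : 0 ≤ C := (abs_nonneg _).trans b1
    refine (abs_sub _ _).trans (add_le_add ?_ ?_)
    · have : Ψ' (x / δ) / δ * φ x = (x / δ * Ψ' (x / δ)) * (φ x / x) := by field_simp
      rw [this, abs_mul]
      refine mul_le_mul b1 ?_ (abs_nonneg _) hC
      rw [abs_div, abs_of_pos hx']
      exact div_le_self (abs_nonneg _) hx
    · rw [abs_mul]; gcongr; exact P.bd _ ht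


set_option maxHeartbeats 1000000 in
theorem eigen_sol {χ σ lam : ℝ} {φ : ℝ → ℝ} (hχ : 0 ≤ χ) (hσ : 0 < σ) (hl : 0 < lam)
    (hcont : Continuous φ) (hint : Integrable (fun y => dataDensity χ y * |φ y|))
    (heig : ∀ x : ℝ, lam * φ x = ∫ y : ℝ, dataDensity χ y * Real.exp (-|x - y| / σ) * φ y)
    (hodd : ∀ x : ℝ, φ (-x) = -φ x) :
    ∃ d, Sol χ (1 / σ ^ 2) ((Real.Gamma ((1 + χ) / 2) * σ * lam / 2) ^ (1 / (χ + 2))) φ d := by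
  set G := Real.Gamma ((1 + χ) / 2) with hG
  have hG0 : 0 < G := Real.Gamma_pos_of_pos (by linarith)
  have hpc : Continuous (dataDensity χ) := by
    have : dataDensity χ = fun x => pt χ x / G := rfl
    rw [this]; exact (pt_cont hχ).div_const _
  have hp0 : ∀ y, 0 ≤ dataDensity χ y := fun y => by unfold dataDensity; positivity
  set h : ℝ → ℝ := fun y => dataDensity χ y * φ y with hh
  have hhc : Continuous h := hpc.mul hcont
  have hhi : Integrable h := by
    refine hint.mono' hhc.aestronglyMeasurable (Eventually.of_forall fun y => ?_)
    simp only [hh]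
    rw [Real.norm_eq_abs, abs_mul, abs_of_nonneg (hp0 y)]
  set u : ℝ → ℝ := fun y => Real.exp (y / σ) * h y with hu
  set v : ℝ → ℝ := fun y => Real.exp (-(y / σ)) * h y with hv
  have huc : Continuous u := by simp only [hu]; fun_prop
  have hvc : Continuous v := by simp only [hv]; fun_prop
  have hui : ∀ x, IntegrableOn u (Iic x) := by
    intro x
    refine Integrable.mono' (hhi.norm.integrableOn.const_mul (Real.exp (x / σ))) huc.aestronglyMeasurable ?_
    filter_upwards [ae_restrict_mem measurableSet_Iic] with y hy
    have hy' : y ≤ x := hy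
    simp only [hu]
    rw [norm_mul, Real.norm_of_nonneg (Real.exp_pos _).le]
    gcongr
  have hvi : ∀ x, IntegrableOn v (Ioi x) := by
    intro x
    refine Integrable.mono' (hhi.norm.integrableOn.const_mul (Real.exp (-(x / σ)))) hvc.aestronglyMeasurable ?_
    filter_upwards [ae_restrict_mem measurableSet_Ioi] with y hy
    have hy' : x ≤ y := le_of_lt hy
    simp only [hv]
    rw [norm_mul, Real.norm_of_nonneg (Real.exp_pos _).le]
    gcongr
  set A : ℝ → ℝ := fun x => ∫ y in Iic x, u y with hA
  set B : ℝ → ℝ := fun x => ∫ y in Ioi x, v y with hB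
  have hAd : ∀ x, HasDerivAt A (u x) x := by
    intro x
    have e : A = fun z => A 0 + ∫ y in (0:ℝ)..z, u y := by
      funext z
      simp only [hA]
      rw [← intervalIntegral.integral_Iic_sub_Iic (hui 0) (hui z)]; ring
    rw [e]
    exact (intervalIntegral.integral_hasDerivAt_right (huc.intervalIntegrable _ _)
      huc.aestronglyMeasurable.stronglyMeasurableAtFilter huc.continuousAt).const_add _
  have hBd : ∀ x, HasDerivAt B (-v x) x := by
    intro x
    have e : B = fun z => B 0 - ∫ y in (0:ℝ)..z, v y := by
      funext z
      simp only [hB]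
      rw [← intervalIntegral.integral_Ioi_sub_Ioi' (hvi 0) (hvi z)]; ring
    rw [e]
    exact (intervalIntegral.integral_hasDerivAt_right (hvc.intervalIntegrable _ _)
      hvc.aestronglyMeasurable.stronglyMeasurableAtFilter hvc.continuousAt).const_sub _
  have hkey : ∀ x, φ x = lam⁻¹ * (Real.exp (-(x / σ)) * A x + Real.exp (x / σ) * B x) := by
    intro x
    rw [eq_inv_mul_iff_mul_eq₀ hl.ne', heig x]
    simp only [hA, hB]
    rw [← integral_const_mul, ← integral_const_mul]
    have e1 : ∀ y ∈ Iic x, Real.exp (-(x / σ)) * u y = dataDensity χ y * Real.exp (-|x - y| / σ) * φ y := by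
      intro y hy
      have hy' : y ≤ x := hy
      rw [abs_of_nonneg (by linarith)]
      simp only [hu, hh]
      have : -(x - y) / σ = -(x / σ) + y / σ := by ring
      rw [this, Real.exp_add]; ring
    have e2 : ∀ y ∈ Ioi x, Real.exp (x / σ) * v y = dataDensity χ y * Real.exp (-|x - y| / σ) * φ y := by
      intro y hy
      have hy' : x < y := hy
      rw [abs_of_nonpos (by linarith)]
      simp only [hv, hh]
      have : -(-(x - y)) / σ = x / σ + -(y / σ) := by ring
      rw [this, Real.exp_add]; ring
    have i1 := IntegrableOn.congr_fun ((hui x).const_mul (Real.exp (-(x / σ)))) e1 measurableSet_Iic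
    have i2 := IntegrableOn.congr_fun ((hvi x).const_mul (Real.exp (x / σ))) e2 measurableSet_Ioi
    rw [setIntegral_congr_fun measurableSet_Iic e1, setIntegral_congr_fun measurableSet_Ioi e2,
      intervalIntegral.integral_Iic_add_Ioi i1 i2]
  have hAt : Tendsto (fun x => Real.exp (-(x / σ)) * A x) atTop (𝓝 0) := by
    have := tendsto_integral_filter_of_dominated_convergence (μ := volume) (l := atTop)
      (F := fun x y => (Iic x).indicator (fun y => Real.exp (-(x / σ)) * u y) y) (f := fun _ => (0:ℝ))
      (fun y => ‖h y‖) (Eventually.of_forall fun x => ((huc.const_smul (Real.exp (-(x / σ)))).aestronglyMeasurable.indicator measurableSet_Iic)) ?_ hhi.norm ?_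
    · rw [integral_zero] at this
      refine this.congr fun x => ?_
      rw [integral_indicator measurableSet_Iic, integral_const_mul]
    · refine Eventually.of_forall fun x => Eventually.of_forall fun y => ?_
      by_cases hy : y ≤ x
      · rw [indicator_of_mem (mem_Iic.2 hy)]
        simp only [hu]
        rw [← mul_assoc, ← Real.exp_add, norm_mul, Real.norm_of_nonneg (Real.exp_pos _).le]
        have : Real.exp (-(x / σ) + y / σ) ≤ 1 := by
          apply Real.exp_le_one_iff.2
          have : y / σ ≤ x / σ := by gcongr
          linarith
        exact mul_le_of_le_one_left (norm_nonneg _) this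
      · rw [indicator_of_notMem (by simpa using hy)]; simp
    · refine Eventually.of_forall fun y => ?_
      have h1 : Tendsto (fun x => Real.exp (-(x / σ)) * |u y|) atTop (𝓝 0) := by
        have := (Real.tendsto_exp_neg_atTop_nhds_zero.comp (tendsto_id.atTop_div_const hσ)).mul_const |u y|
        rw [zero_mul] at this
        exact this
      refine squeeze_zero_norm (fun x => ?_) h1
      refine (norm_indicator_le_norm_self _ _).trans ?_
      rw [norm_mul, Real.norm_of_nonneg (Real.exp_pos _).le, Real.norm_eq_abs]
  have hBt : Tendsto (fun x => Real.exp (x / σ) * B x) atTop (𝓝 0) := by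
    have := tendsto_integral_filter_of_dominated_convergence (μ := volume) (l := atTop)
      (F := fun x y => (Ioi x).indicator (fun y => Real.exp (x / σ) * v y) y) (f := fun _ => (0:ℝ))
      (fun y => ‖h y‖) (Eventually.of_forall fun x => ((hvc.const_smul (Real.exp (x / σ))).aestronglyMeasurable.indicator measurableSet_Ioi)) ?_ hhi.norm ?_
    · rw [integral_zero] at this
      refine this.congr fun x => ?_
      rw [integral_indicator measurableSet_Ioi, integral_const_mul]
    · refine Eventually.of_forall fun x => Eventually.of_forall fun y => ?_
      by_cases hy : x < y
      · rw [indicator_of_mem (mem_Ioi.2 hy)]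
        simp only [hv]
        rw [← mul_assoc, ← Real.exp_add, norm_mul, Real.norm_of_nonneg (Real.exp_pos _).le]
        have : Real.exp (x / σ + -(y / σ)) ≤ 1 := by
          apply Real.exp_le_one_iff.2
          have : x / σ ≤ y / σ := by gcongr
          linarith
        exact mul_le_of_le_one_left (norm_nonneg _) this
      · rw [indicator_of_notMem (by simpa using hy)]; simp
    · refine Eventually.of_forall fun y => ?_
      apply tendsto_const_nhds.congr'
      filter_upwards [eventually_ge_atTop y] with x hx
      rw [indicator_of_notMem (by simpa using hx)]
  refine ⟨fun x => (lam * σ)⁻¹ * (-(Real.exp (-(x / σ)) * A x) + Real.exp (x / σ) * B x), ?_, ?_, ?_, ?_, ?_⟩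
  · intro x
    have hφe : φ = fun x => lam⁻¹ * (Real.exp (-(x / σ)) * A x + Real.exp (x / σ) * B x) := funext hkey
    have d1 : HasDerivAt (fun x : ℝ => x / σ) (1 / σ) x := (hasDerivAt_id x).div_const σ
    have := (((d1.neg.exp).mul (hAd x)).add ((d1.exp).mul (hBd x))).const_mul lam⁻¹
    rw [hφe]
    refine this.congr_deriv ?_
    simp only [hu, hv, Pi.neg_apply, Real.exp_neg]
    field_simp
    ring
  · intro x
    have d1 : HasDerivAt (fun x : ℝ => x / σ) (1 / σ) x := (hasDerivAt_id x).div_const σ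
    have := (((d1.neg.exp).mul (hAd x)).neg.add ((d1.exp).mul (hBd x))).const_mul (lam * σ)⁻¹
    refine this.congr_deriv ?_
    have hδ : ((G * σ * lam / 2) ^ (1 / (χ + 2))) ^ (-(χ + 2)) = 2 / (G * σ * lam) := by
      rw [← Real.rpow_mul (by positivity)]
      have : 1 / (χ + 2) * -(χ + 2) = -1 := by
        have : χ + 2 ≠ 0 := by linarith
        field_simp
      rw [this, Real.rpow_neg_one, inv_div]
    rw [hδ, sub_mul]
    have hh' : |x| ^ χ * Real.exp (-x ^ 2) * φ x = G * h x := by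
      simp only [hh, dataDensity, ← hG]; field_simp
    have e2 : 2 / (G * σ * lam) * (|x| ^ χ * Real.exp (-x ^ 2)) * φ x = 2 / (σ * lam) * h x := by
      rw [mul_assoc, hh']; field_simp
    rw [e2, hkey x]
    simp only [hu, hv, Pi.neg_apply, Real.exp_neg]
    generalize h x = hx
    field_simp
    ring
  · have := hodd 0
    rw [neg_zero] at this; linarith
  · have := (hAt.add hBt).const_mul lam⁻¹
    rw [add_zero, mul_zero] at this
    exact this.congr fun x => (hkey x).symm
  · have := (hAt.neg.add hBt).const_mul (lam * σ)⁻¹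
    rw [neg_zero, add_zero, mul_zero] at this
    exact this

theorem coef_eq {χ ξ : ℝ} {φ : ℝ → ℝ} (hodd : ∀ x : ℝ, φ (-x) = -φ x) :
    (∫ x : ℝ, dataDensity χ x * targetFun ξ x * φ x)
      = 2 / Real.Gamma ((1 + χ) / 2) * ∫ x in Ioi (0:ℝ), x ^ (χ - ξ) * Real.exp (-x ^ 2) * φ x := by
  have h := integral_comp_abs (f := fun x => dataDensity χ x * targetFun ξ x * φ x)
  have e : ∀ x : ℝ, dataDensity χ |x| * targetFun ξ |x| * φ |x| = dataDensity χ x * targetFun ξ x * φ x := by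
    intro x
    rcases lt_trichotomy x 0 with hx | rfl | hx
    · rw [abs_of_neg hx, hodd]
      unfold dataDensity targetFun
      rw [abs_neg, Real.sign_neg, neg_sq]; ring
    · simp
    · rw [abs_of_pos hx]
  simp only [e] at h
  rw [h, div_mul_eq_mul_div, mul_div_assoc, ← integral_div]
  congr 1
  apply setIntegral_congr_fun measurableSet_Ioi
  intro x hx
  have hx' : 0 < x := hx
  simp only [dataDensity, targetFun]
  rw [abs_of_pos hx', Real.sign_of_pos hx', sub_eq_add_neg, Real.rpow_add hx']
  ring

theorem norm_eq {χ : ℝ} {φ : ℝ → ℝ} (hχ : 0 ≤ χ) (hodd : ∀ x : ℝ, φ (-x) = -φ x)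
    (hnorm : (∫ x : ℝ, dataDensity χ x * φ x ^ 2) = 1) :
    IntegrableOn (fun x => pt χ x * φ x ^ 2) (Ioi 0) ∧
      (∫ x in Ioi (0:ℝ), pt χ x * φ x ^ 2) = Real.Gamma ((1 + χ) / 2) / 2 := by
  set G := Real.Gamma ((1 + χ) / 2) with hG
  have hG0 : 0 < G := Real.Gamma_pos_of_pos (by linarith)
  have e0 : ∀ x, pt χ x * φ x ^ 2 = G * (dataDensity χ x * φ x ^ 2) := by
    intro x; unfold pt dataDensity; rw [← hG]; field_simp
  have hi : Integrable (fun x => dataDensity χ x * φ x ^ 2) := by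
    by_contra hc
    rw [integral_undef hc] at hnorm
    norm_num at hnorm
  simp only [e0]
  refine ⟨(hi.const_mul G).integrableOn, ?_⟩
  rw [integral_const_mul]
  have h := integral_comp_abs (f := fun x => dataDensity χ x * φ x ^ 2)
  have e : ∀ x : ℝ, dataDensity χ |x| * φ |x| ^ 2 = dataDensity χ x * φ x ^ 2 := by
    intro x
    rcases abs_choice x with hx | hx
    · rw [hx]
    · rw [hx, hodd]
      unfold dataDensity
      rw [abs_neg, neg_sq, neg_sq]
  simp only [e] at h
  rw [hnorm] at h
  have : (∫ x in Ioi (0:ℝ), dataDensity χ x * φ x ^ 2) = 1 / 2 := by linarith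
  rw [this]; ring


theorem final_real {X I Ψ0 d c1 C1 m g : ℝ} (hX : 0 < X) (hΨ : 0 < Ψ0) (hc1 : 0 < c1) (hC1 : 0 < C1)
    (hm : 0 < m) (h1 : |X * I - Ψ0 * d| ≤ Ψ0 / 2 * |d|) (h2 : c1 * m * d ^ 2 ≤ g) (h3 : g ≤ C1 * m * d ^ 2) :
    Ψ0 ^ 2 / 4 * (g / C1) * (1 / (m * X ^ 2)) ≤ I ^ 2 ∧
      I ^ 2 ≤ 9 / 4 * Ψ0 ^ 2 * (g / c1) * (1 / (m * X ^ 2)) := by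
  have a1 : Ψ0 * |d| = |Ψ0 * d| := by rw [abs_mul, abs_of_pos hΨ]
  have a2 : |Ψ0 * d| - |X * I| ≤ |X * I - Ψ0 * d| := by
    rw [abs_sub_comm]; exact abs_sub_abs_le_abs_sub _ _
  have a3 : |X * I| - |Ψ0 * d| ≤ |X * I - Ψ0 * d| := abs_sub_abs_le_abs_sub _ _
  have b1 : Ψ0 / 2 * |d| ≤ |X * I| := by linarith
  have b2 : |X * I| ≤ 3 / 2 * Ψ0 * |d| := by linarith
  have s1 := pow_le_pow_left₀ (by positivity) b1 2
  have s2 := pow_le_pow_left₀ (abs_nonneg _) b2 2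
  rw [sq_abs, mul_pow, sq_abs] at s1
  rw [sq_abs, mul_pow (3 / 2 * Ψ0), sq_abs] at s2
  have g1 : g / C1 ≤ m * d ^ 2 := by rw [div_le_iff₀ hC1]; linarith
  have g2 : m * d ^ 2 ≤ g / c1 := by rw [le_div_iff₀ hc1]; linarith
  constructor
  · rw [mul_one_div, div_le_iff₀ (by positivity)]
    calc Ψ0 ^ 2 / 4 * (g / C1) ≤ Ψ0 ^ 2 / 4 * (m * d ^ 2) := by gcongr
      _ = m * ((Ψ0 / 2) ^ 2 * d ^ 2) := by ring
      _ ≤ m * (X * I) ^ 2 := by gcongr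
      _ = _ := by ring
  · rw [mul_one_div, le_div_iff₀ (by positivity)]
    calc I ^ 2 * (m * X ^ 2) = m * (X * I) ^ 2 := by ring
      _ ≤ m * ((3 / 2 * Ψ0) ^ 2 * d ^ 2) := by gcongr
      _ = 9 / 4 * Ψ0 ^ 2 * (m * d ^ 2) := by ring
      _ ≤ _ := by gcongr

set_option maxHeartbeats 1000000 in
theorem main_aux
    (χ ξ σ : ℝ) (hχ : 0 ≤ χ) (hξ0 : 0 ≤ ξ) (hξ : ξ < (χ + 1) / 2) (hσ : 0 < σ)
    (lam : ℕ → ℝ) (φ : ℕ → ℝ → ℝ)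
    (hcont : ∀ ρ, Continuous (φ ρ))
    (hint : ∀ ρ, Integrable (fun y => dataDensity χ y * |φ ρ y|))
    (heig : ∀ (ρ : ℕ) (x : ℝ),
      lam ρ * φ ρ x = ∫ y : ℝ, dataDensity χ y * Real.exp (-|x - y| / σ) * φ ρ y)
    (hodd : ∀ (ρ : ℕ) (x : ℝ), φ ρ (-x) = -φ ρ x)
    (hnorm : ∀ ρ : ℕ, (∫ x : ℝ, dataDensity χ x * φ ρ x ^ 2) = 1)
    (hpos : ∀ ρ, 0 < lam ρ) (hlim : Tendsto lam atTop (𝓝 0)) :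
    ∃ k K : ℝ, 0 < k ∧ 0 < K ∧ ∀ᶠ ρ : ℕ in atTop,
      k * lam ρ ^ ((3 * χ + 4 - 4 * ξ) / 2 / (χ + 2))
          ≤ (∫ x : ℝ, dataDensity χ x * targetFun ξ x * φ ρ x) ^ 2 ∧
      (∫ x : ℝ, dataDensity χ x * targetFun ξ x * φ ρ x) ^ 2
          ≤ K * lam ρ ^ ((3 * χ + 4 - 4 * ξ) / 2 / (χ + 2)) := by
  set G := Real.Gamma ((1 + χ) / 2) with hG
  have hG0 : 0 < G := Real.Gamma_pos_of_pos (by linarith)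
  have hn : 0 < χ + 2 := by linarith
  set δ : ℕ → ℝ := fun ρ => (G * σ * lam ρ / 2) ^ (1 / (χ + 2)) with hδ
  have hδ0 : ∀ ρ, 0 < δ ρ := fun ρ => by have := hpos ρ; simp only [hδ]; positivity
  have hδl : Tendsto δ atTop (𝓝 0) := by
    have h1 : Tendsto (fun ρ => G * σ * lam ρ / 2) atTop (𝓝 0) := by
      have := (hlim.const_mul (G * σ)).div_const 2
      simpa using this
    have h2 := h1.rpow_const (p := 1 / (χ + 2)) (Or.inr (by positivity))
    rwa [Real.zero_rpow (by positivity)] at h2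
  set yy : ℕ → ℝ := fun ρ => Real.sqrt ((χ + 3 / 2) * (-Real.log (δ ρ))) with hyy
  have hyl : Tendsto yy atTop atTop := by
    have h1 : Tendsto δ atTop (𝓝[>] 0) := tendsto_nhdsWithin_iff.2 ⟨hδl, Eventually.of_forall hδ0⟩
    have h2 := tendsto_neg_atBot_atTop.comp (Real.tendsto_log_nhdsGT_zero.comp h1)
    exact Real.tendsto_sqrt_atTop.comp (h2.const_mul_atTop (by linarith))
  have hdl : ∀ᶠ ρ in atTop, dl χ (yy ρ) = δ ρ := by
    filter_upwards [hδl.eventually (ge_mem_nhds zero_lt_one)] with ρ hρ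
    have : 0 ≤ -Real.log (δ ρ) := by have := Real.log_nonpos (hδ0 ρ).le hρ; linarith
    simp only [dl, hyy]
    rw [Real.sq_sqrt (by positivity), mul_div_cancel_left₀ _ (by linarith), neg_neg, Real.exp_log (hδ0 ρ)]
  set s := 1 / (σ * Real.sqrt 2) with hs
  have hs0 : 0 < s := by positivity
  have hκ : 1 / σ ^ 2 = 2 * s ^ 2 := by
    rw [hs, div_pow, mul_pow, Real.sq_sqrt (by norm_num)]; field_simp
  obtain ⟨Ψ0, C, Ψ, Ψ', hΨ0, hC, P⟩ := Psi_exists hχ hξ0 hξ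
  have hκp : 0 < 2 * s ^ 2 := by positivity
  set ε := Ψ0 / 2 / (C * (1 + 2 * s ^ 2)) with hε
  have hεp : 0 < ε := by positivity
  have hL1 := hyl.eventually (L1_small hχ hs0 ε hεp)
  obtain ⟨C1, hC1, hup⟩ := mass_upper hχ hs0
  obtain ⟨c1, hc1, hlow⟩ := mass_lower (κ := 2 * s ^ 2) hχ hκp
  have hup' := hyl.eventually hup
  have hlow' := hyl.eventually hlow
  set E := (3 * χ + 4 - 4 * ξ) / 2 with hE
  refine ⟨(2 / G) ^ 2 * (Ψ0 ^ 2 / 4 * (G / 2 / C1)) * (G * σ / 2) ^ (E / (χ + 2)),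
    (2 / G) ^ 2 * (9 / 4 * Ψ0 ^ 2 * (G / 2 / c1)) * (G * σ / 2) ^ (E / (χ + 2)), by positivity, by positivity, ?_⟩
  filter_upwards [hdl, hL1, hup', hlow'] with ρ e1 e2 e3 e4
  obtain ⟨d, S⟩ := eigen_sol hχ hσ (hpos ρ) (hcont ρ) (hint ρ) (heig ρ) (hodd ρ)
  rw [hκ] at S
  change Sol χ (2 * s ^ 2) (δ ρ) (φ ρ) d at S
  rw [e1] at e2 e3 e4
  obtain ⟨i1, i2⟩ := e2 _ _ S
  have i3 := e3 _ _ S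
  obtain ⟨n1, n2⟩ := norm_eq hχ (hodd ρ) (hnorm ρ)
  have i4 := e4 _ _ S n1
  rw [n2] at i3 i4
  have i5 := ident hχ hξ hκp.le (hδ0 ρ) P S i1
  set I := ∫ x in Ioi (0:ℝ), x ^ (χ - ξ) * Real.exp (-x ^ 2) * φ ρ x with hI
  have i6 : |δ ρ ^ (ξ - (χ + 2)) * I - Ψ0 * d 0| ≤ Ψ0 / 2 * |d 0| := by
    refine i5.trans ?_
    calc _ ≤ C * (1 + 2 * s ^ 2) * (ε * |d 0|) := by gcongr
      _ = _ := by rw [hε]; field_simp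
  have hd := hδ0 ρ
  obtain ⟨f1, f2⟩ := final_real (Real.rpow_pos_of_pos hd _) hΨ0 hc1 hC1 (Real.rpow_pos_of_pos hd _) i6 i4 i3
  have hpow : 1 / (δ ρ ^ ((χ + 2) / 2 + 1) * (δ ρ ^ (ξ - (χ + 2))) ^ 2) = (G * σ / 2) ^ (E / (χ + 2)) * lam ρ ^ (E / (χ + 2)) := by
    rw [← Real.mul_rpow (by positivity) (hpos ρ).le]
    have q1 : G * σ / 2 * lam ρ = G * σ * lam ρ / 2 := by ring
    have q2 : E / (χ + 2) = 1 / (χ + 2) * E := by ring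
    have hp := hpos ρ
    rw [q1, q2, Real.rpow_mul (by positivity)]
    change _ = δ ρ ^ E
    rw [← Real.rpow_natCast, ← Real.rpow_mul hd.le, ← Real.rpow_add hd, one_div, ← Real.rpow_neg hd.le]
    congr 1
    rw [hE]; push_cast; ring
  rw [hpow] at f1 f2
  rw [coef_eq (hodd ρ), mul_pow]
  constructor
  · calc _ = (2 / G) ^ 2 * (Ψ0 ^ 2 / 4 * (G / 2 / C1) * ((G * σ / 2) ^ (E / (χ + 2)) * lam ρ ^ (E / (χ + 2)))) := by ring
      _ ≤ _ := by gcongr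
  · calc _ ≤ (2 / G) ^ 2 * (9 / 4 * Ψ0 ^ 2 * (G / 2 / c1) * ((G * σ / 2) ^ (E / (χ + 2)) * lam ρ ^ (E / (χ + 2)))) := by gcongr
      _ = _ := by ring


end Helpers

/-- For a sequence of normalized odd eigenpairs of the Laplace kernel
with eigenvalues `λ_ρ ≍ ρ^{−2}`, the squared coefficients of the target satisfy
`c_ρ² ≍ ρ^{−(3χ+4−4ξ)/(χ+2)}`. -/
theorem coefficient_rank_scaling
    (χ ξ σ : ℝ) (hχ : 0 ≤ χ) (hξ0 : 0 ≤ ξ) (hξ : ξ < (χ + 1) / 2) (hσ : 0 < σ)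
    (lam : ℕ → ℝ) (φ : ℕ → ℝ → ℝ)
    (hcont : ∀ ρ, Continuous (φ ρ))
    (hint : ∀ ρ, Integrable (fun y => dataDensity χ y * |φ ρ y|))
    (heig : ∀ (ρ : ℕ) (x : ℝ),
      lam ρ * φ ρ x = ∫ y : ℝ, dataDensity χ y * Real.exp (-|x - y| / σ) * φ ρ y)
    (hodd : ∀ (ρ : ℕ) (x : ℝ), φ ρ (-x) = -φ ρ x)
    (hnorm : ∀ ρ : ℕ, (∫ x : ℝ, dataDensity χ x * φ ρ x ^ 2) = 1)
    (hpos : ∀ ρ, 0 < lam ρ)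
    (a b : ℝ) (ha : 0 < a) (hab : a ≤ b)
    (hscal : ∀ᶠ ρ : ℕ in atTop,
      a * (ρ : ℝ) ^ (-2 : ℤ) ≤ lam ρ ∧ lam ρ ≤ b * (ρ : ℝ) ^ (-2 : ℤ)) :
    ∃ c C : ℝ, 0 < c ∧ c ≤ C ∧ ∃ ρ₀ : ℕ, ∀ ρ : ℕ, ρ₀ ≤ ρ →
      c * (ρ : ℝ) ^ (-((3 * χ + 4 - 4 * ξ) / (χ + 2)))
          ≤ (∫ x : ℝ, dataDensity χ x * targetFun ξ x * φ ρ x) ^ 2 ∧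
      (∫ x : ℝ, dataDensity χ x * targetFun ξ x * φ ρ x) ^ 2
          ≤ C * (ρ : ℝ) ^ (-((3 * χ + 4 - 4 * ξ) / (χ + 2))) := by
  have hzp : ∀ ρ : ℕ, (ρ : ℝ) ^ (-2 : ℤ) = (ρ : ℝ) ^ (-2 : ℝ) := by
    intro ρ
    rw [← Real.rpow_intCast]; norm_num
  have hlim : Tendsto lam atTop (nhds 0) := by
    have h1 : Tendsto (fun ρ : ℕ => b * (ρ : ℝ) ^ (-2 : ℝ)) atTop (nhds 0) := by
      have := ((tendsto_rpow_neg_atTop (y := 2) (by norm_num)).comp tendsto_natCast_atTop_atTop).const_mul b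
      rw [mul_zero] at this
      exact this
    refine squeeze_zero' (Eventually.of_forall fun ρ => (hpos ρ).le) ?_ h1
    filter_upwards [hscal] with ρ hρ
    rw [← hzp]; exact hρ.2
  obtain ⟨k, K, hk, hK, hev⟩ :=
    main_aux χ ξ σ hχ hξ0 hξ hσ lam φ hcont hint heig hodd hnorm hpos hlim
  have hb : 0 < b := lt_of_lt_of_le ha hab
  have hn : 0 < χ + 2 := by linarith
  have hE : 0 ≤ (3 * χ + 4 - 4 * ξ) / 2 / (χ + 2) := div_nonneg (by linarith) hn.le
  have hpw : ∀ ρ : ℕ, ((ρ : ℝ) ^ (-2 : ℝ)) ^ ((3 * χ + 4 - 4 * ξ) / 2 / (χ + 2))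
      = (ρ : ℝ) ^ (-((3 * χ + 4 - 4 * ξ) / (χ + 2))) := by
    intro ρ
    rw [← Real.rpow_mul (Nat.cast_nonneg ρ)]
    congr 1
    field_simp
  obtain ⟨ρ₀, hρ₀⟩ := eventually_atTop.1 (hev.and hscal)
  refine ⟨k * a ^ ((3 * χ + 4 - 4 * ξ) / 2 / (χ + 2)),
    max (k * a ^ ((3 * χ + 4 - 4 * ξ) / 2 / (χ + 2))) (K * b ^ ((3 * χ + 4 - 4 * ξ) / 2 / (χ + 2))),
    by positivity, le_max_left _ _, ρ₀, fun ρ hρ => ?_⟩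
  obtain ⟨⟨h1, h2⟩, h3, h4⟩ := hρ₀ ρ hρ
  rw [hzp] at h3 h4
  have hr : 0 ≤ (ρ : ℝ) ^ (-2 : ℝ) := Real.rpow_nonneg (Nat.cast_nonneg ρ) _
  rw [← hpw]
  constructor
  · refine le_trans ?_ h1
    rw [mul_assoc, ← Real.mul_rpow ha.le hr]
    gcongr
  · refine h2.trans ?_
    calc K * lam ρ ^ ((3 * χ + 4 - 4 * ξ) / 2 / (χ + 2))
        ≤ K * (b * (ρ : ℝ) ^ (-2 : ℝ)) ^ ((3 * χ + 4 - 4 * ξ) / 2 / (χ + 2)) := by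
          have := (hpos ρ).le
          gcongr
      _ = K * b ^ ((3 * χ + 4 - 4 * ξ) / 2 / (χ + 2))
          * ((ρ : ℝ) ^ (-2 : ℝ)) ^ ((3 * χ + 4 - 4 * ξ) / 2 / (χ + 2)) := by
          rw [Real.mul_rpow hb.le hr]; ring
      _ ≤ _ := by
          gcongr
          exact le_max_right _ _
end

section
/- Let σ > 0, λ̃ > 0, let p : ℝ → ℝ be continuous, nonnegative and integrable, and let f* : ℝ → ℝ be continuous with ∫_ℝ p (f*)² < ∞. Define the functional E[u] = (λ̃/σ) ( ∫_ℝ u² + σ² ∫_ℝ (u')² ) + ∫_ℝ p (u − f*)². Suppose f : ℝ → ℝ is twice continuously differentiable, with f and f' square-integrable and ∫_ℝ p (f − f*)² < ∞, and suppose f minimizes E in the sense that E[f] ≤ E[f + η] for every smooth compactly supported η : ℝ → ℝ. Then for all x ∈ ℝ, σ² f''(x) = ( (σ/λ̃) p(x) + 1 ) f(x) − (σ/λ̃) p(x) f*(x). -/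
open MeasureTheory Real

/-- The infinite-data ridge regression objective for the Laplace kernel:
`E[u] = (λ̃/σ)(∫u² + σ²∫(u')²) + ∫ p (u − f*)²`. -/
noncomputable def ridgeObjective (σ lamt : ℝ) (p fstar : ℝ → ℝ) (u : ℝ → ℝ) : ℝ :=
  (lamt / σ) * ((∫ x : ℝ, u x ^ 2) + σ ^ 2 * ∫ x : ℝ, deriv u x ^ 2)
    + ∫ x : ℝ, p x * (u x - fstar x) ^ 2

lemma int_add3 (a b c : ℝ → ℝ) (α β : ℝ) (ha : Integrable a) (hb : Integrable b)
    (hc : Integrable c) (d : ℝ) :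
    ∫ x, (α * a x + β * b x) + d * c x = α * (∫ x, a x) + β * (∫ x, b x) + d * ∫ x, c x := by
  have h : Integrable (fun x => α * a x + β * b x) := (ha.const_mul α).add (hb.const_mul β)
  rw [integral_add h (hc.const_mul d), integral_add (ha.const_mul α) (hb.const_mul β),
    integral_const_mul, integral_const_mul, integral_const_mul]

lemma quad_expand (w a b : ℝ → ℝ) (hw : Continuous w) (ha : Continuous a) (hb : Continuous b)
    (hbc : HasCompactSupport b) (hi : Integrable (fun x => w x * a x ^ 2)) (t : ℝ) :
    ∫ x, w x * (a x + t * b x) ^ 2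
      = (∫ x, w x * a x ^ 2) + t * (2 * ∫ x, (w x * a x) * b x)
        + t ^ 2 * ∫ x, (w x * b x) * b x := by
  have h1 : Integrable (fun x => (w x * a x) * b x) :=
    ((hw.mul ha).mul hb).integrable_of_hasCompactSupport (hbc.mul_left (f := fun x => w x * a x))
  have h2 : Integrable (fun x => (w x * b x) * b x) :=
    ((hw.mul hb).mul hb).integrable_of_hasCompactSupport (hbc.mul_left (f := fun x => w x * b x))
  have h3 : (fun x => w x * (a x + t * b x) ^ 2) = fun x => (1 * (w x * a x ^ 2) +
      (t * 2) * ((w x * a x) * b x)) + t ^ 2 * ((w x * b x) * b x) := by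
    funext x; ring
  rw [h3, int_add3 _ _ _ _ _ hi h1 h2]
  ring

lemma lin_zero (L Q : ℝ) (h : ∀ t : ℝ, 0 ≤ t * L + t ^ 2 * Q) : L = 0 := by
  have hQ : 0 < |Q| + 1 := by positivity
  have h1 := h (-(L / (|Q| + 1)))
  have h2 : (-(L / (|Q| + 1))) * L + (-(L / (|Q| + 1))) ^ 2 * Q
      = L ^ 2 * (Q - (|Q| + 1)) / (|Q| + 1) ^ 2 := by
    field_simp
    ring
  rw [h2] at h1
  by_contra hL
  have h3 : 0 < L ^ 2 := by positivity
  have h4 : L ^ 2 * (Q - (|Q| + 1)) / (|Q| + 1) ^ 2 < 0 := by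
    apply div_neg_of_neg_of_pos _ (by positivity)
    nlinarith [le_abs_self Q]
  linarith

/-- A `C²` minimizer (against smooth compactly supported
perturbations) of the infinite-data ridge objective satisfies the Euler–Lagrange
equation `σ² f'' = ((σ/λ̃) p + 1) f − (σ/λ̃) p f*`. -/
theorem ridge_minimizer_euler_lagrange
    (σ lamt : ℝ) (hσ : 0 < σ) (hlamt : 0 < lamt)
    (p : ℝ → ℝ) (hp_cont : Continuous p) (hp_nonneg : ∀ x, 0 ≤ p x)
    (hp_int : Integrable p)
    (fstar : ℝ → ℝ) (hfstar_cont : Continuous fstar)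
    (hfstar_L2 : Integrable (fun x => p x * fstar x ^ 2))
    (f : ℝ → ℝ) (hf : ContDiff ℝ 2 f)
    (hf_L2 : Integrable (fun x => f x ^ 2))
    (hf'_L2 : Integrable (fun x => deriv f x ^ 2))
    (hf_err : Integrable (fun x => p x * (f x - fstar x) ^ 2))
    (hmin : ∀ η : ℝ → ℝ, ContDiff ℝ (⊤ : ℕ∞) η → HasCompactSupport η →
      ridgeObjective σ lamt p fstar f ≤ ridgeObjective σ lamt p fstar (f + η)) :
    ∀ x : ℝ, σ ^ 2 * deriv (deriv f) x
      = ((σ / lamt) * p x + 1) * f x - (σ / lamt) * p x * fstar x := by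
  have hfc : Continuous f := hf.continuous
  have hfd : Differentiable ℝ f := hf.differentiable (by norm_num)
  have hf1 : ContDiff ℝ 1 (deriv f) := by
    have : ContDiff ℝ (1 + 1) f := by simpa [one_add_one_eq_two] using hf
    exact (contDiff_succ_iff_deriv.1 this).2.2
  have hf1c : Continuous (deriv f) := hf1.continuous
  have hf1d : Differentiable ℝ (deriv f) := hf1.differentiable (by norm_num)
  have hf2c : Continuous (deriv (deriv f)) := hf1.continuous_deriv (by norm_num)
  set g : ℝ → ℝ := fun x =>
    (lamt / σ) * (f x - σ ^ 2 * deriv (deriv f) x) + p x * (f x - fstar x) with hg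
  have hgc : Continuous g := by rw [hg]; fun_prop
  have key : ∀ η : ℝ → ℝ, ContDiff ℝ (⊤ : ℕ∞) η → HasCompactSupport η →
      ∫ x, η x • g x = 0 := by
    intro η hη hηc
    have hη0 : Continuous η := hη.continuous
    have hηd : Differentiable ℝ η := hη.differentiable (by simp)
    have hη1 : Continuous (deriv η) := hη.continuous_deriv (by simp)
    have hη1c : HasCompactSupport (deriv η) := hηc.deriv
    have hInt : ∀ u : ℝ → ℝ, Continuous u → Integrable (fun x => u x * η x) := fun u hu =>
      (hu.mul hη0).integrable_of_hasCompactSupport (hηc.mul_left (f := u))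
    have ibp : ∫ x, deriv f x * deriv η x = - ∫ x, deriv (deriv f) x * η x := by
      apply integral_mul_deriv_eq_deriv_mul_of_integrable
      · exact fun x _ => (hf1d x).hasDerivAt
      · exact fun x _ => (hηd x).hasDerivAt
      · exact (hf1c.mul hη1).integrable_of_hasCompactSupport (hη1c.mul_left (f := deriv f))
      · exact hInt _ hf2c
      · exact hInt _ hf1c
    have hL := lin_zero
      ((lamt / σ) * (2 * (∫ x, (1 * f x) * η x) + σ ^ 2 * (2 * ∫ x, (1 * deriv f x) * deriv η x))
        + 2 * ∫ x, (p x * (f x - fstar x)) * η x)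
      ((lamt / σ) * ((∫ x, (1 * η x) * η x) + σ ^ 2 * (∫ x, (1 * deriv η x) * deriv η x))
        + ∫ x, (p x * η x) * η x) (by
      intro t
      have hm := hmin (fun x => t * η x) (contDiff_const.mul hη)
        (hηc.mul_left (f := fun _ => t))
      have e1 := quad_expand (fun _ => 1) f η continuous_const hfc hη0 hηc (by simpa using hf_L2) t
      have e2 := quad_expand (fun _ => 1) (deriv f) (deriv η) continuous_const hf1c hη1 hη1c
        (by simpa using hf'_L2) t
      have e3 := quad_expand p (fun x => f x - fstar x) η hp_cont (hfc.sub hfstar_cont) hη0 hηc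
        hf_err t
      have hd : ∀ x, deriv (f + fun x => t * η x) x = deriv f x + t * deriv η x := by
        intro x
        rw [deriv_add (hfd x) ((hηd x).const_mul t), deriv_const_mul _ (hηd x)]
      have hs : ∀ x, p x * (f x + t * η x - fstar x) ^ 2
          = p x * (f x - fstar x + t * η x) ^ 2 := by
        intro x; ring
      simp only [ridgeObjective, hd, Pi.add_apply, hs] at hm
      simp only [one_mul] at e1 e2 ⊢
      rw [e1, e2, e3] at hm
      nlinarith [hm])
    simp only [one_mul] at hL
    rw [ibp] at hL
    have h3 : (fun x => η x • g x) = fun x => ((lamt / σ) * (f x * η x) +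
        (-(lamt / σ * σ ^ 2)) * (deriv (deriv f) x * η x)) + 1 * ((p x * (f x - fstar x)) * η x) := by
      funext x; simp only [hg, smul_eq_mul]; ring
    have i1 := hInt f hfc
    have i2 := hInt _ hf2c
    have i3 := hInt (fun x => p x * (f x - fstar x)) (hp_cont.mul (hfc.sub hfstar_cont))
    rw [h3, int_add3 _ _ _ _ _ i1 i2 i3]
    linarith
  have hae := ae_eq_zero_of_integral_contDiff_smul_eq_zero (μ := volume)
    hgc.locallyIntegrable key
  have hg0 : g = fun _ => 0 := (hgc.ae_eq_iff_eq volume continuous_const).1 hae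
  intro x
  have hx := congrFun hg0 x
  simp only [hg] at hx
  field_simp at hx ⊢
  linarith
end
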